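/- arXiv:2510.01911 — 6 statements merged into one kernel-verified Lean document; each statement's English description precedes it below -/
import Mathlib

section
/- For every point x in the open disk D (i.e. |x| < R), one has ∫_{∂D} ln|x − y| dσ(y) = 2πR ln R. -/
/-!
Identify `ℝ²` with `ℂ`. The pushforward under `Complex.arg` of the arclength measure on the circle
of radius `R` is `R` times Lebesgue measure on `(-π, π]` (`map_arg_hausdorffMeasure_sphere`): the
upper bound holds because `θ ↦ R e^{iθ}` is `R`-Lipschitz; for the lower bound, chords subtending
an angle at most `δ` have length at least `R (1 - δ²/6)` times the angle (`chord_lower_bound`), so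
`arg` is Lipschitz with a constant close to `1/R` on short arcs, and summing over a partition into
arcs of angle `δ` and letting `δ → 0` gives the inequality. The integral over the circle is thus
`2πR` times the circle average of `ln |x - ·|`, which Mathlib evaluates to `ln R` for `|x| ≤ R`.
-/

open MeasureTheory

lemma one_sub_mul_abs_le_two_mul_abs_sin {δ t : ℝ} (ht : |t| ≤ δ) :
    (1 - δ ^ 2 / 6) * |t| ≤ |2 * Real.sin (t / 2)| := by
  wlog h : 0 ≤ t generalizing t
  · have := this (t := -t) (by rwa [abs_neg]) (by linarith)
    rwa [abs_neg, neg_div, Real.sin_neg, mul_neg, abs_neg] at this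
  rw [abs_of_nonneg h] at ht ⊢
  rcases h.eq_or_lt with rfl | h
  · simp
  refine le_trans ?_ (le_abs_self _)
  have h1 := Real.sin_gt_sub_cube (x := t / 2) (by linarith)
  have h2 : t ^ 2 ≤ δ ^ 2 := by gcongr
  nlinarith [mul_le_mul_of_nonneg_left h2 h.le, pow_pos h 3]

/-- Two points on a circle of radius `R` whose angles differ by at most `δ` are almost as far apart
as the length of the arc joining them. -/
lemma chord_lower_bound {R δ a b : ℝ} (hR : 0 < R) (hab : |a - b| ≤ δ) :
    R * (1 - δ ^ 2 / 6) * |a - b| ≤ ‖circleMap 0 R a - circleMap 0 R b‖ := by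
  have h : circleMap 0 R a - circleMap 0 R b
      = R * Complex.exp (b * Complex.I) * (Complex.exp (Complex.I * (a - b : ℝ)) - 1) := by
    rw [mul_sub, mul_assoc, mul_assoc, ← Complex.exp_add]
    simp only [circleMap]
    push_cast
    ring_nf
  rw [h, norm_mul, norm_mul, Complex.norm_exp_ofReal_mul_I, Complex.norm_exp_I_mul_ofReal_sub_one,
    Complex.norm_real, Real.norm_of_nonneg hR.le, Real.norm_eq_abs, mul_one, mul_assoc]
  gcongr
  exact one_sub_mul_abs_le_two_mul_abs_sin hab

lemma circleMap_arg {R : ℝ} {z : ℂ} (hz : z ∈ Metric.sphere (0 : ℂ) R) :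
    circleMap 0 R z.arg = z := by
  rw [mem_sphere_zero_iff_norm] at hz
  rw [circleMap, zero_add, ← hz, Complex.norm_mul_exp_arg_mul_I]

lemma arg_circleMap {R θ : ℝ} (hR : 0 < R) (hθ : θ ∈ Set.Ioc (-Real.pi) Real.pi) :
    (circleMap 0 R θ).arg = θ := by
  rw [circleMap, zero_add, Complex.exp_mul_I, Complex.arg_mul_cos_add_sin_mul_I hR hθ]

/-- On an arc of angle `δ` the argument is Lipschitz with a constant that tends to `1 / R`
as `δ → 0`. -/
lemma lipschitzOnWith_arg {R δ : ℝ} (hR : 0 < R) (hδ : δ ≤ 1) (hδ0 : 0 < δ) (n : ℤ) :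
    LipschitzOnWith (R * (1 - δ ^ 2 / 6)).toNNReal⁻¹ Complex.arg
      (Complex.arg ⁻¹' Set.Ico (n • δ) ((n + 1) • δ) ∩ Metric.sphere 0 R) := by
  have hc : 0 < R * (1 - δ ^ 2 / 6) := mul_pos hR (by nlinarith)
  refine LipschitzOnWith.of_dist_le_mul fun z hz w hw => ?_
  have hzw : |z.arg - w.arg| ≤ δ := by
    have h1 := hz.1
    have h2 := hw.1
    simp only [Set.mem_preimage, Set.mem_Ico, zsmul_eq_mul, Int.cast_add, Int.cast_one] at h1 h2
    rw [abs_le]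
    constructor <;> linarith
  have h := chord_lower_bound hR hzw
  rw [circleMap_arg hz.2, circleMap_arg hw.2] at h
  rw [NNReal.coe_inv, Real.coe_toNNReal _ hc.le, inv_mul_eq_div, le_div_iff₀ hc, dist_eq_norm,
    dist_eq_norm, Real.norm_eq_abs]
  linarith

/-- The arclength of a piece of a short arc is at least almost `R` times the measure of its angles,
since `arg` maps the piece onto its set of angles and is Lipschitz there. -/
lemma volume_inter_arc_le {R δ : ℝ} (hR : 0 < R) (hδ : δ ≤ 1) (hδ0 : 0 < δ) (n : ℤ) (s : Set ℝ) :
    ENNReal.ofReal (R * (1 - δ ^ 2 / 6)) *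
        volume (s ∩ Set.Ioc (-Real.pi) Real.pi ∩ Set.Ico (n • δ) ((n + 1) • δ))
      ≤ μH[1] (Complex.arg ⁻¹' (s ∩ Set.Ico (n • δ) ((n + 1) • δ)) ∩ Metric.sphere 0 R) := by
  have hc : 0 < R * (1 - δ ^ 2 / 6) := mul_pos hR (by nlinarith)
  have hc' : (R * (1 - δ ^ 2 / 6)).toNNReal ≠ 0 := by simpa using hc
  set J := Set.Ico (n • δ) ((n + 1) • δ)
  have hsub : s ∩ Set.Ioc (-Real.pi) Real.pi ∩ J
      ⊆ Complex.arg '' (Complex.arg ⁻¹' (s ∩ J) ∩ Metric.sphere 0 R) := by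
    rintro θ ⟨⟨hs, hθ⟩, hJ⟩
    refine ⟨circleMap 0 R θ, ⟨?_, circleMap_mem_sphere _ hR.le _⟩, arg_circleMap hR hθ⟩
    rw [Set.mem_preimage, arg_circleMap hR hθ]
    exact ⟨hs, hJ⟩
  have hlip := ((lipschitzOnWith_arg hR hδ hδ0 n).mono (s := Complex.arg ⁻¹' (s ∩ J) ∩
    Metric.sphere 0 R) (fun z hz => ⟨hz.1.2, hz.2⟩)).hausdorffMeasure_image_le zero_le_one
  rw [hausdorffMeasure_real, ENNReal.rpow_one, ENNReal.coe_inv hc'] at hlip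
  exact (ENNReal.mul_le_iff_le_inv (ENNReal.coe_ne_zero.2 hc') ENNReal.coe_ne_top).2
    ((measure_mono hsub).trans hlip)

/-- Lower bound for the arclength of a piece of the circle: the short-arc estimates sum up over the
partition of the angles into intervals of length `δ`. -/
lemma smul_volume_le {R δ : ℝ} (hR : 0 < R) (hδ : δ ≤ 1) (hδ0 : 0 < δ) {s : Set ℝ}
    (hs : MeasurableSet s) :
    ENNReal.ofReal (R * (1 - δ ^ 2 / 6)) * volume (s ∩ Set.Ioc (-Real.pi) Real.pi)
      ≤ μH[1] (Complex.arg ⁻¹' s ∩ Metric.sphere 0 R) := by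
  have hdisj := Set.pairwise_disjoint_Ico_zsmul δ
  have hJ := iUnion_Ico_zsmul hδ0
  rw [← Set.inter_univ (s ∩ _), ← hJ, Set.inter_iUnion, measure_iUnion, ← ENNReal.tsum_mul_left]
  · refine (ENNReal.tsum_le_tsum fun n => volume_inter_arc_le hR hδ hδ0 n s).trans ?_
    rw [← measure_iUnion]
    · refine measure_mono (Set.iUnion_subset fun n z hz => ⟨hz.1.1, hz.2⟩)
    · intro i j hij
      exact ((hdisj hij).preimage Complex.arg).mono (fun z hz => hz.1.2) (fun z hz => hz.1.2)
    · exact fun n => (Complex.measurable_arg (hs.inter measurableSet_Ico)).inter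
        Metric.isClosed_sphere.measurableSet
  · intro i j hij
    exact (hdisj hij).mono Set.inter_subset_right Set.inter_subset_right
  · exact fun n => (hs.inter measurableSet_Ioc).inter measurableSet_Ico

/-- Arclength on a circle centred at the origin is the radius times the angle. -/
lemma map_arg_hausdorffMeasure_sphere {R : ℝ} (hR : 0 < R) :
    ((μH[1] : Measure ℂ).restrict (Metric.sphere 0 R)).map Complex.arg
      = ENNReal.ofReal R • volume.restrict (Set.Ioc (-Real.pi) Real.pi) := by
  ext s hs
  rw [Measure.map_apply Complex.measurable_arg hs,
    Measure.restrict_apply (Complex.measurable_arg hs), Measure.smul_apply,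
    Measure.restrict_apply hs, smul_eq_mul]
  apply le_antisymm
  · have hsub : Complex.arg ⁻¹' s ∩ Metric.sphere 0 R
        ⊆ circleMap 0 R '' (s ∩ Set.Ioc (-Real.pi) Real.pi) :=
      fun z hz => ⟨z.arg, ⟨hz.1, Complex.arg_mem_Ioc z⟩, circleMap_arg hz.2⟩
    refine (measure_mono hsub).trans
      (((lipschitzWith_circleMap 0 R).hausdorffMeasure_image_le zero_le_one _).trans_eq ?_)
    rw [hausdorffMeasure_real, ENNReal.rpow_one, Real.nnabs_of_nonneg hR.le]
    rfl
  · have hlim : Filter.Tendsto (fun δ : ℝ => ENNReal.ofReal (R * (1 - δ ^ 2 / 6)) *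
        volume (s ∩ Set.Ioc (-Real.pi) Real.pi)) (nhdsWithin 0 (Set.Ioi 0))
        (nhds (ENNReal.ofReal R * volume (s ∩ Set.Ioc (-Real.pi) Real.pi))) := by
      refine ENNReal.Tendsto.mul_const ?_ (Or.inl (by simpa using hR))
      have : Continuous fun δ : ℝ => ENNReal.ofReal (R * (1 - δ ^ 2 / 6)) :=
        ENNReal.continuous_ofReal.comp (by fun_prop)
      simpa using (this.tendsto 0).mono_left (nhdsWithin_le_nhds (s := Set.Ioi 0))
    refine le_of_tendsto hlim ?_
    filter_upwards [Ioc_mem_nhdsGT (zero_lt_one' ℝ)] with δ hδ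
    exact smul_volume_le hR hδ.2 hδ.1 hs

lemma setIntegral_sphere_eq_circleAverage {R : ℝ} (hR : 0 < R) {f : ℂ → ℝ} (hf : Measurable f) :
    ∫ z in Metric.sphere (0 : ℂ) R, f z ∂μH[1] = 2 * Real.pi * R * Real.circleAverage f 0 R := by
  have h1 : ∫ z in Metric.sphere (0 : ℂ) R, f z ∂μH[1]
      = ∫ z in Metric.sphere (0 : ℂ) R, f (circleMap 0 R z.arg) ∂μH[1] :=
    setIntegral_congr_fun Metric.isClosed_sphere.measurableSet
      fun z hz => by simp only [circleMap_arg hz]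
  have hm : Measurable fun θ => f (circleMap 0 R θ) := hf.comp (continuous_circleMap 0 R).measurable
  rw [h1, ← integral_map (f := fun θ => f (circleMap 0 R θ)) Complex.measurable_arg.aemeasurable
    hm.aestronglyMeasurable, map_arg_hausdorffMeasure_sphere hR, integral_smul_measure,
    ENNReal.toReal_ofReal hR.le, ← intervalIntegral.integral_of_le (by linarith [Real.pi_pos]),
    Real.circleAverage_def]
  have hper : Function.Periodic (fun θ => f (circleMap 0 R θ)) (2 * Real.pi) :=
    fun θ => by simp only [periodic_circleMap 0 R θ]
  have h2 := hper.intervalIntegral_add_eq (-Real.pi) 0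
  rw [show -Real.pi + 2 * Real.pi = Real.pi by ring, zero_add] at h2
  rw [h2, smul_eq_mul, smul_eq_mul]
  field_simp

/-- For every point `x` in the open disk of radius `R` in `ℝ²`, the integral of
`ln |x - y|` over the boundary circle (with respect to the one-dimensional
Hausdorff/arclength measure) equals `2 π R ln R`. -/
theorem disk_log_integral (R : ℝ) (hR : 0 < R)
    (x : EuclideanSpace ℝ (Fin 2))
    (hx : x ∈ Metric.ball (0 : EuclideanSpace ℝ (Fin 2)) R) :
    ∫ y in Metric.sphere (0 : EuclideanSpace ℝ (Fin 2)) R,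
        Real.log ‖x - y‖ ∂μH[1]
      = 2 * Real.pi * R * Real.log R := by
  let e : ℂ ≃ₗᵢ[ℝ] EuclideanSpace ℝ (Fin 2) := Complex.orthonormalBasisOneI.repr
  obtain ⟨a, rfl⟩ := e.surjective x
  have ha : a ∈ Metric.closedBall (0 : ℂ) |R| := by
    rw [mem_ball_zero_iff, e.norm_map] at hx
    rw [mem_closedBall_zero_iff, abs_of_pos hR]
    exact hx.le
  rw [← (e.toIsometryEquiv.measurePreserving_hausdorffMeasure 1).setIntegral_preimage_emb
    e.toHomeomorph.measurableEmbedding]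
  have hpre : e.toIsometryEquiv ⁻¹' Metric.sphere 0 R = Metric.sphere (0 : ℂ) R := by
    ext z
    simp
  have hfun : ∀ z : ℂ, Real.log ‖e a - e.toIsometryEquiv z‖ = Real.log ‖z - a‖ := fun z => by
    rw [LinearIsometryEquiv.coe_toIsometryEquiv, ← map_sub, e.norm_map, norm_sub_rev]
  simp only [hpre, hfun]
  rw [setIntegral_sphere_eq_circleAverage hR (by fun_prop),
    circleAverage_log_norm_sub_const_of_mem_closedBall ha]
end

section
/- For every x ∈ D and each i ∈ {1,2}, ∫_{∂D} (x_i − y_i)²/|x − y|² dσ(y) = πR. -/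
/-!
Identify `ℝ²` with `ℂ`, write `w` for the centre point `x` and `z` for the boundary point `y`.

The integral is computed with the mean value property. Since
`(Re u)² / |u|² = 1/2 + Re (u / conj u) / 2` and `(Im u)² / |u|² = 1/2 - Re (u / conj u) / 2`,
it suffices that `(w - z) / conj (w - z)` has mean zero on the circle `|z| = R`. There
`conj z = R² / z`, so this quotient equals `z (w - z) / (conj w * z - R²)`, which is holomorphic on
a neighbourhood of the closed disk because `|conj w * z| < R²`, and vanishes at the centre
(`integral_re_diskFun`).

It remains to know that arclength is `R dθ`, that is, that the one-dimensional Hausdorff measure on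
the circle is `R` times the push-forward of Lebesgue measure under `θ ↦ R exp (iθ)`
(`restrict_sphere_hausdorffMeasure`). This map is `R`-Lipschitz, and on arcs of angle at most `δ`
its inverse is Lipschitz with constant `1 / (R (1 - δ))`; cutting a set of angles into pieces of
length `δ` and letting `δ → 0` gives the measure of its image.
-/

open MeasureTheory

open Set Filter Topology
open scoped ENNReal NNReal ComplexConjugate

/-- A chord of a circle is nearly as long as its arc, when the arc is short. -/
lemma circleMap_dist_lower {R δ : ℝ} (hR : 0 < R) (hδ1 : δ < 1)
    {s t : ℝ} (h : |s - t| ≤ δ) :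
    R * (1 - δ) * |s - t| ≤ dist (circleMap 0 R s) (circleMap 0 R t) := by
  have e : circleMap 0 R s - circleMap 0 R t
      = R * Complex.exp (t * Complex.I) * (Complex.exp (Complex.I * ((s - t : ℝ) : ℂ)) - 1) := by
    simp only [circleMap, zero_add]
    rw [mul_sub, mul_assoc, ← Complex.exp_add]
    push_cast
    ring_nf
  rw [dist_eq_norm, e, norm_mul, norm_mul, Complex.norm_exp_ofReal_mul_I,
    Complex.norm_exp_I_mul_ofReal_sub_one, Complex.norm_real, Real.norm_of_nonneg hR.le, mul_one,
    mul_assoc]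
  refine mul_le_mul_of_nonneg_left ?_ hR.le
  have key : ∀ u : ℝ, 0 ≤ u → u ≤ δ → (1 - δ) * u ≤ 2 * Real.sin (u / 2) := by
    intro u hu0 hu
    rcases hu0.eq_or_lt with rfl | hu0
    · simp
    have h1 := Real.sin_gt_sub_cube (half_pos hu0)
    have h2 : u * u ≤ δ * 1 := mul_le_mul hu (hu.trans hδ1.le) hu0.le (hu0.le.trans hu)
    have h3 : u * (u * u) ≤ u * (δ * 1) := mul_le_mul_of_nonneg_left h2 hu0.le
    have h4 : 0 ≤ u * δ := mul_nonneg hu0.le (hu0.le.trans hu)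
    nlinarith
  have h5 := key _ (abs_nonneg _) h
  rw [Real.norm_eq_abs]
  rcases abs_cases (s - t) with ⟨h6, -⟩ | ⟨h6, -⟩
  · rw [h6] at h5 ⊢
    exact h5.trans (le_abs_self _)
  · rw [h6] at h5 ⊢
    refine h5.trans ?_
    rw [neg_div, Real.sin_neg, mul_neg]
    exact neg_le_abs _

lemma circleMap_injOn_Ioc {R : ℝ} (hR : 0 < R) :
    InjOn (circleMap 0 R) (Ioc 0 (2 * Real.pi)) := by
  rw [← uIoc_of_le Real.two_pi_pos.le]
  refine injOn_circleMap_of_abs_sub_le hR.ne' ?_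
  rw [zero_sub, abs_neg, abs_of_pos Real.two_pi_pos]

lemma le_hausdorffMeasure_circleMap_image_of_short {R δ : ℝ} (hR : 0 < R)
    (hδ1 : δ < 1) {A : Set ℝ} (hA : ∀ s ∈ A, ∀ t ∈ A, |s - t| ≤ δ) :
    ENNReal.ofReal (R * (1 - δ)) * volume A ≤ μH[1] (circleMap 0 R '' A) := by
  have hc : 0 < R * (1 - δ) := mul_pos hR (by linarith)
  have hinj : InjOn (circleMap 0 R) A := by
    intro s hs t ht hst
    have h := circleMap_dist_lower hR hδ1 (hA s hs t ht)
    rw [hst, dist_self] at h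
    have : |s - t| ≤ 0 := by
      by_contra! h'
      linarith [mul_pos hc h']
    linarith [abs_nonpos_iff.1 this]
  have hlip : LipschitzOnWith (Real.toNNReal (R * (1 - δ))⁻¹)
      (Function.invFunOn (circleMap 0 R) A) (circleMap 0 R '' A) := by
    refine LipschitzOnWith.of_dist_le_mul ?_
    rintro _ ⟨s, hs, rfl⟩ _ ⟨t, ht, rfl⟩
    rw [hinj.leftInvOn_invFunOn hs, hinj.leftInvOn_invFunOn ht,
      Real.coe_toNNReal _ (inv_nonneg.2 hc.le), ← div_eq_inv_mul, le_div_iff₀ hc, mul_comm,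
      Real.dist_eq]
    exact circleMap_dist_lower hR hδ1 (hA s hs t ht)
  have h := hlip.hausdorffMeasure_image_le (d := 1) zero_le_one
  rw [hinj.leftInvOn_invFunOn.image_image, MeasureTheory.hausdorffMeasure_real,
    ENNReal.rpow_one] at h
  calc ENNReal.ofReal (R * (1 - δ)) * volume A
      ≤ ENNReal.ofReal (R * (1 - δ)) *
        (ENNReal.ofReal (R * (1 - δ))⁻¹ * μH[1] (circleMap 0 R '' A)) := by gcongr; exact h
    _ = μH[1] (circleMap 0 R '' A) := by
      rw [← mul_assoc, ← ENNReal.ofReal_mul hc.le, mul_inv_cancel₀ hc.ne', ENNReal.ofReal_one,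
        one_mul]

lemma le_hausdorffMeasure_circleMap_image {R δ : ℝ} (hR : 0 < R) (hδ0 : 0 < δ) (hδ1 : δ < 1)
    {A : Set ℝ} (hAm : MeasurableSet A) (hA : A ⊆ Ioc 0 (2 * Real.pi)) :
    ENNReal.ofReal (R * (1 - δ)) * volume A ≤ μH[1] (circleMap 0 R '' A) := by
  set J : ℤ → Set ℝ := fun n ↦ A ∩ Ioc (n • δ) ((n + 1) • δ) with hJ
  have hU : A = ⋃ n, J n := by rw [← inter_iUnion, iUnion_Ioc_zsmul hδ0, inter_univ]
  have hJm : ∀ n, MeasurableSet (J n) := fun n ↦ hAm.inter measurableSet_Ioc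
  have hJd : Pairwise (Function.onFun Disjoint J) := fun m n hmn ↦
    ((pairwise_disjoint_Ioc_zsmul δ) hmn).mono inter_subset_right inter_subset_right
  have hJs : ∀ n, J n ⊆ Ioc 0 (2 * Real.pi) := fun n ↦ inter_subset_left.trans hA
  have hinj := circleMap_injOn_Ioc hR
  have himd : Pairwise (Function.onFun Disjoint fun n ↦ circleMap 0 R '' J n) := by
    intro m n hmn
    rw [Function.onFun, disjoint_iff_inter_eq_empty, ← hinj.image_inter (hJs m) (hJs n),
      (hJd hmn).inter_eq, image_empty]
  have himm : ∀ n, MeasurableSet (circleMap 0 R '' J n) := fun n ↦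
    (hJm n).image_of_continuousOn_injOn (continuous_circleMap 0 R).continuousOn
      (hinj.mono (hJs n))
  calc ENNReal.ofReal (R * (1 - δ)) * volume A
      = ∑' n, ENNReal.ofReal (R * (1 - δ)) * volume (J n) := by
        rw [ENNReal.tsum_mul_left, ← measure_iUnion hJd hJm, ← hU]
    _ ≤ ∑' n, μH[1] (circleMap 0 R '' J n) := by
        refine ENNReal.tsum_le_tsum fun n ↦
          le_hausdorffMeasure_circleMap_image_of_short hR hδ1 ?_
        rintro s ⟨-, hs⟩ t ⟨-, ht⟩
        rw [add_smul, one_smul] at hs ht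
        rw [abs_le]
        constructor <;> linarith [hs.1, hs.2, ht.1, ht.2]
    _ = μH[1] (circleMap 0 R '' A) := by
        rw [← measure_iUnion himd himm, ← image_iUnion, ← hU]

lemma hausdorffMeasure_circleMap_image {R : ℝ} (hR : 0 < R)
    {A : Set ℝ} (hAm : MeasurableSet A) (hA : A ⊆ Ioc 0 (2 * Real.pi)) :
    μH[1] (circleMap 0 R '' A) = ENNReal.ofReal R * volume A := by
  apply le_antisymm
  · have h := (lipschitzWith_circleMap 0 R).hausdorffMeasure_image_le (d := 1) zero_le_one A
    rw [MeasureTheory.hausdorffMeasure_real, ENNReal.rpow_one] at h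
    have hRn : Real.nnabs R = R.toNNReal := by
      ext
      simp [hR.le]
    rwa [hRn] at h
  · have hne : volume A ≠ ∞ := ((measure_mono hA).trans_lt measure_Ioc_lt_top).ne
    have hlim : Tendsto (fun δ : ℝ ↦ ENNReal.ofReal (R * (1 - δ)) * volume A) (𝓝[>] 0)
        (𝓝 (ENNReal.ofReal R * volume A)) := by
      refine ENNReal.Tendsto.mul_const ?_ (Or.inr hne)
      have : Tendsto (fun δ : ℝ ↦ R * (1 - δ)) (𝓝[>] 0) (𝓝 (R * (1 - 0))) :=
        ((by fun_prop : Continuous fun δ : ℝ ↦ R * (1 - δ)).tendsto 0).mono_left inf_le_left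
      rw [sub_zero, mul_one] at this
      exact ENNReal.tendsto_ofReal this
    refine le_of_tendsto hlim ?_
    filter_upwards [Ioo_mem_nhdsGT (zero_lt_one' ℝ)] with δ hδ
    exact le_hausdorffMeasure_circleMap_image hR hδ.1 hδ.2 hAm hA

/-- Arclength on a circle of radius `R` is `R dθ`. -/
lemma restrict_sphere_hausdorffMeasure {R : ℝ} (hR : 0 < R) :
    (μH[1] : Measure ℂ).restrict (Metric.sphere 0 R) =
      ENNReal.ofReal R • (volume.restrict (Ioc 0 (2 * Real.pi))).map (circleMap 0 R) := by
  ext B hB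
  have hm : Measurable (circleMap 0 R) := (continuous_circleMap 0 R).measurable
  have hset : B ∩ Metric.sphere 0 R
      = circleMap 0 R '' (circleMap 0 R ⁻¹' B ∩ Ioc 0 (2 * Real.pi)) := by
    rw [inter_comm (_ ⁻¹' _), image_inter_preimage, image_circleMap_Ioc, abs_of_pos hR, inter_comm]
  rw [Measure.restrict_apply hB, Measure.smul_apply, Measure.map_apply hm hB,
    Measure.restrict_apply (hm hB), hset,
    hausdorffMeasure_circleMap_image hR ((hm hB).inter measurableSet_Ioc) inter_subset_right,
    smul_eq_mul]

lemma setIntegral_sphere_hausdorffMeasure {R : ℝ} (hR : 0 < R) {F : ℂ → ℝ} (hF : Measurable F) :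
    ∫ z in Metric.sphere 0 R, F z ∂μH[1] = R * ∫ θ in 0..2 * Real.pi, F (circleMap 0 R θ) := by
  rw [restrict_sphere_hausdorffMeasure hR, integral_smul_measure,
    integral_map (continuous_circleMap 0 R).measurable.aemeasurable hF.aestronglyMeasurable,
    intervalIntegral.integral_of_le Real.two_pi_pos.le, ENNReal.toReal_ofReal hR.le, smul_eq_mul]

/-- The holomorphic function of `z` that equals `(w - z) / conj (w - z)` on the circle
`|z| = R`. -/
noncomputable def diskFun (R : ℝ) (w z : ℂ) : ℂ := z * (w - z) / (conj w * z - (R : ℂ) ^ 2)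

lemma diskFun_denom_ne {R : ℝ} (hR : 0 < R) {w z : ℂ} (hw : ‖w‖ < R) (hz : ‖z‖ ≤ R) :
    conj w * z - (R : ℂ) ^ 2 ≠ 0 := by
  intro h
  have h1 : ‖conj w * z‖ = ‖(R : ℂ) ^ 2‖ := by rw [sub_eq_zero.1 h]
  rw [norm_mul, norm_pow, Complex.norm_real, Real.norm_of_nonneg hR.le, RCLike.norm_conj] at h1
  nlinarith [norm_nonneg z, norm_nonneg w]

lemma continuous_diskFun_circleMap {R : ℝ} (hR : 0 < R) {w : ℂ} (hw : ‖w‖ < R) :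
    Continuous fun θ ↦ diskFun R w (circleMap 0 R θ) := by
  unfold diskFun
  have := continuous_circleMap 0 R
  refine Continuous.div (by fun_prop) (by fun_prop) fun θ ↦ diskFun_denom_ne hR hw ?_
  simp [abs_of_pos hR]

/-- The mean value property for `diskFun`, which vanishes at the centre of the disk. -/
lemma integral_re_diskFun {R : ℝ} (hR : 0 < R) {w : ℂ} (hw : ‖w‖ < R) :
    ∫ θ in 0..2 * Real.pi, (diskFun R w (circleMap 0 R θ)).re = 0 := by
  have hd : ∀ z ∈ Metric.closedBall (0 : ℂ) |R|, DifferentiableAt ℂ (diskFun R w) z := by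
    intro z hz
    rw [abs_of_pos hR, mem_closedBall_zero_iff] at hz
    exact DifferentiableAt.div (by fun_prop) (by fun_prop) (diskFun_denom_ne hR hw hz)
  have h := circleAverage_of_differentiable_on_off_countable (f := diskFun R w) (c := 0) (R := R)
    countable_empty (fun z hz ↦ (hd z hz).continuousAt.continuousWithinAt)
    (fun z hz ↦ hd z (Metric.ball_subset_closedBall hz.1))
  have h0 : diskFun R w 0 = 0 := by simp [diskFun]
  rw [h0, Real.circleAverage_def, smul_eq_zero_iff_right (by positivity)] at h
  have h2 := Complex.reCLM.intervalIntegral_comp_comm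
    ((continuous_diskFun_circleMap hR hw).intervalIntegrable (μ := volume) 0 (2 * Real.pi))
  simpa [h] using h2

lemma diskFun_eq {R : ℝ} (hR : 0 < R) {w z : ℂ} (hw : ‖w‖ < R) (hz : ‖z‖ = R) :
    diskFun R w z = (w - z) / conj (w - z) := by
  have hne : w - z ≠ 0 := by
    intro h
    rw [sub_eq_zero.1 h] at hw
    linarith
  have hne' : conj (w - z) ≠ 0 := (map_ne_zero _).2 hne
  have hzz : z * conj z = (R : ℂ) ^ 2 := by rw [Complex.mul_conj', hz]
  rw [diskFun, div_eq_div_iff (diskFun_denom_ne hR hw hz.le) hne', ← hzz, map_sub]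
  ring

lemma re_div_conj (u : ℂ) : (u / conj u).re = (u.re ^ 2 - u.im ^ 2) / ‖u‖ ^ 2 := by
  rw [Complex.div_re, Complex.normSq_conj, Complex.normSq_eq_norm_sq, Complex.conj_re,
    Complex.conj_im]
  ring

lemma re_sq_div {u : ℂ} (hu : u ≠ 0) :
    u.re ^ 2 / ‖u‖ ^ 2 = 1 / 2 + 1 / 2 * (u / conj u).re := by
  have h : ‖u‖ ^ 2 = u.re ^ 2 + u.im ^ 2 := by
    rw [Complex.sq_norm, Complex.normSq_apply]; ring
  have h' : ‖u‖ ≠ 0 := norm_ne_zero_iff.2 hu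
  rw [re_div_conj]
  field_simp
  rw [h]
  ring

lemma im_sq_div {u : ℂ} (hu : u ≠ 0) :
    u.im ^ 2 / ‖u‖ ^ 2 = 1 / 2 + -1 / 2 * (u / conj u).re := by
  have h : ‖u‖ ^ 2 = u.re ^ 2 + u.im ^ 2 := by
    rw [Complex.sq_norm, Complex.normSq_apply]; ring
  have h' : ‖u‖ ≠ 0 := norm_ne_zero_iff.2 hu
  rw [re_div_conj]
  field_simp
  rw [h]
  ring

/-- A function of the form `1/2 + c Re ((w - z) / conj (w - z))` away from `z = w` has integral
`π R` over the circle; the coordinate quotients are the cases `c = 1/2` and `c = -1/2`. -/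
lemma setIntegral_of_eq {R : ℝ} (hR : 0 < R) {w : ℂ} (hw : ‖w‖ < R) {F : ℂ → ℝ}
    (hF : Measurable F) (c : ℝ)
    (h : ∀ z, w - z ≠ 0 → F z = 1 / 2 + c * ((w - z) / conj (w - z)).re) :
    ∫ z in Metric.sphere 0 R, F z ∂μH[1] = Real.pi * R := by
  rw [setIntegral_sphere_hausdorffMeasure hR hF]
  have h1 : ∀ θ, F (circleMap 0 R θ) = 1 / 2 + c * (diskFun R w (circleMap 0 R θ)).re := by
    intro θ
    have hz : ‖circleMap 0 R θ‖ = R := by simp [abs_of_pos hR]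
    rw [diskFun_eq hR hw hz]
    refine h _ fun h0 ↦ ?_
    rw [sub_eq_zero.1 h0] at hw
    linarith
  have hc : Continuous fun θ ↦ c * (diskFun R w (circleMap 0 R θ)).re :=
    continuous_const.mul (Complex.continuous_re.comp (continuous_diskFun_circleMap hR hw))
  simp_rw [h1]
  rw [intervalIntegral.integral_add (by simp) (hc.intervalIntegrable _ _),
    intervalIntegral.integral_const_mul, integral_re_diskFun hR hw]
  simp
  ring

/-- For every `x` in the open disk of radius `R` in `ℝ²` and each coordinate
index `i`, the integral of `(x_i - y_i)² / |x - y|²` over the boundary circle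
(with respect to the one-dimensional Hausdorff/arclength measure) equals `π R`. -/
theorem disk_quotient_integral (R : ℝ) (hR : 0 < R)
    (x : EuclideanSpace ℝ (Fin 2))
    (hx : x ∈ Metric.ball (0 : EuclideanSpace ℝ (Fin 2)) R) (i : Fin 2) :
    ∫ y in Metric.sphere (0 : EuclideanSpace ℝ (Fin 2)) R,
        (x i - y i) ^ 2 / ‖x - y‖ ^ 2 ∂μH[1]
      = Real.pi * R := by
  set e : ℂ ≃ₗᵢ[ℝ] EuclideanSpace ℝ (Fin 2) := Complex.orthonormalBasisOneI.repr with he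
  obtain ⟨w, rfl⟩ := e.surjective x
  have hw : ‖w‖ < R := by simpa using hx
  have hmp : MeasurePreserving e (μH[1]) (μH[1]) :=
    e.toIsometryEquiv.measurePreserving_hausdorffMeasure 1
  have hemb : MeasurableEmbedding e := e.toHomeomorph.measurableEmbedding
  rw [← hmp.setIntegral_preimage_emb hemb]
  have hpre : e ⁻¹' Metric.sphere 0 R = Metric.sphere 0 R := by
    ext z; simp
  rw [hpre]
  simp_rw [← map_sub, e.norm_map]
  have e0 : ∀ z, e z 0 = z.re := fun z ↦ by simp [he, Complex.orthonormalBasisOneI]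
  have e1 : ∀ z, e z 1 = z.im := fun z ↦ by simp [he, Complex.orthonormalBasisOneI]
  fin_cases i
  · simp only [Fin.zero_eta, e0]
    refine setIntegral_of_eq hR hw (by fun_prop) (1 / 2) fun z hz ↦ ?_
    rw [← Complex.sub_re, re_sq_div hz]
  · simp only [Fin.mk_one, e1]
    refine setIntegral_of_eq hR hw (by fun_prop) (-1 / 2) fun z hz ↦ ?_
    rw [← Complex.sub_im, im_sq_div hz]
end

section
/- There exists a real constant c (depending only on λ, μ and R) such that for every x ∈ D, ∫_{∂D} G⁰(x − y) (y₂, −y₁) dσ(y) = c · (x₂, −x₁); that is, the rotational density y ↦ (y₂, −y₁) is an eigenfunction of the single-layer potential associated with the Kelvin matrix on the disk. -/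
/-!
The plane is identified with `ℂ`, so that the density `y ↦ (y₂, -y₁)` becomes `w ↦ -i w`, and the
one-dimensional Hausdorff measure on the circle becomes a measure `ν` on `ℂ` which is finite,
carried by `|w| = R`, and invariant under rotations. Only these three properties are used.
Rotation invariance gives `∫ wⁿ dν = 0` for `n ≥ 1`, so an integral over the circle of `g(w) f(w)`,
with `f` a convergent power series and `g` equal to `w`, `conj w` or `z - w`, reads off a single
coefficient of `f`.

Write `q = conj z / R²`, so `|q w| < 1` on the circle. There
* `log |z - w| = log R + Re log (1 - q w)`, and
* `(z - w) / conj (z - w)` is the constant `-1 / R²` times `w (z - w) / (1 - q w)`,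
  since `w conj w = R²`.

Hence the single-layer integrand is a combination of `w`, `w log (1 - q w)`,
`w conj (log (1 - q w))` and `(z - w) (1 - q w)⁻¹`
(`kernel_eq`). The first two integrate to zero, the last two to `-M z` and `M z`, where
`M` is the total mass of `ν` (`integral_id_mul_conj_log`, `integral_sub_mul_geometric`). The
eigenvalue is therefore `-M (τ₁ + τ₂) / (4 π)`.
-/

open MeasureTheory

/-- `τ₁ = (1/2)(1/μ + 1/(λ+2μ))`. -/
noncomputable def tau1 (lam mu : ℝ) : ℝ := (1 / 2) * (1 / mu + 1 / (lam + 2 * mu))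

/-- `τ₂ = (1/2)(1/μ − 1/(λ+2μ))`. -/
noncomputable def tau2 (lam mu : ℝ) : ℝ := (1 / 2) * (1 / mu - 1 / (lam + 2 * mu))

/-- The Kelvin matrix (elastostatic fundamental solution of the Lamé system):
`G⁰_{ij}(x) = (τ₁/(2π)) δ_{ij} ln|x| − (τ₂/(2π)) x_i x_j / |x|²`. -/
noncomputable def KelvinG0 (lam mu : ℝ) (x : EuclideanSpace ℝ (Fin 2)) :
    Matrix (Fin 2) (Fin 2) ℝ := fun i j =>
  tau1 lam mu / (2 * Real.pi) * (if i = j then Real.log ‖x‖ else 0)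
    - tau2 lam mu / (2 * Real.pi) * (x i * x j / ‖x‖ ^ 2)

open ComplexConjugate

/-- A finite measure on `ℂ` carried by the circle of radius `R` about `0` and invariant under
rotations; it is a multiple of arclength on that circle. -/
structure IsCircleInvariant (ν : Measure ℂ) (R : ℝ) : Prop where
  finite : IsFiniteMeasure ν
  norm_eq : ∀ᵐ w ∂ν, ‖w‖ = R
  rot : ∀ a : Circle, MeasurePreserving (rotation a) ν ν

/-! ### Moments and power series on the circle -/

lemma IsCircleInvariant.integral_pow {ν : Measure ℂ} {R : ℝ} (hν : IsCircleInvariant ν R)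
    {n : ℕ} (hn : n ≠ 0) : ∫ w, w ^ n ∂ν = 0 := by
  -- the rotation by the angle `π / n` multiplies `w ^ n` by `-1`
  have key := (hν.rot (Circle.exp (Real.pi / n))).integral_comp
    (rotation _).toHomeomorph.measurableEmbedding (fun w : ℂ => w ^ n)
  have h1 : ((Circle.exp (Real.pi / n) : Circle) : ℂ) ^ n = -1 := by
    have hn' : (n : ℂ) ≠ 0 := by exact_mod_cast hn
    rw [Circle.coe_exp, ← Complex.exp_nat_mul, ← Complex.exp_pi_mul_I]
    congr 1
    push_cast
    field_simp
  simp only [rotation_apply, mul_pow, h1, neg_mul, one_mul, integral_neg] at key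
  exact self_eq_neg.1 key.symm

lemma IsCircleInvariant.integral_conj_mul_pow {ν : Measure ℂ} {R : ℝ}
    (hν : IsCircleInvariant ν R) (n : ℕ) :
    ∫ w, conj w * w ^ n ∂ν = if n = 1 then (R : ℂ) ^ 2 * ν.real Set.univ else 0 := by
  rcases n with _ | n
  · have := hν.integral_pow one_ne_zero
    simp only [pow_one] at this
    have hc : ∫ w, conj w ∂ν = 0 := by rw [integral_conj, this, map_zero]
    simp [hc]
  · have h : ∫ w, conj w * w ^ (n + 1) ∂ν = ∫ w, (R : ℂ) ^ 2 * w ^ n ∂ν := by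
      apply integral_congr_ae
      filter_upwards [hν.norm_eq] with w hw
      rw [← hw, ← Complex.conj_mul']
      ring
    rw [h, integral_const_mul]
    rcases n with _ | n
    · simp
    · simp [hν.integral_pow]

/-- Termwise integration of a bounded function against a power series converging absolutely on
the circle. -/
lemma IsCircleInvariant.hasSum_integral {ν : Measure ℂ} {R : ℝ} (hν : IsCircleInvariant ν R)
    (hR : 0 < R) {f g : ℂ → ℂ} (hf : Measurable f) (hg : Measurable g) {B : ℝ}
    (hB : ∀ w, ‖w‖ = R → ‖g w‖ ≤ B) {a : ℕ → ℂ} (ha : Summable fun n => ‖a n‖ * R ^ n)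
    (h : ∀ w, ‖w‖ = R → HasSum (fun n => a n * w ^ n) (f w)) :
    Integrable (fun w => g w * f w) ν ∧
      HasSum (fun n => a n * ∫ w, g w * w ^ n ∂ν) (∫ w, g w * f w ∂ν) := by
  have := hν.finite
  have hsum : Summable fun n => B * (‖a n‖ * R ^ n) := ha.mul_left B
  constructor
  · refine Integrable.of_bound (hg.mul hf).aestronglyMeasurable
      (B * ∑' n, ‖a n‖ * R ^ n) ?_
    filter_upwards [hν.norm_eq] with w hw
    rw [norm_mul]
    have hfw : ‖f w‖ ≤ ∑' n, ‖a n‖ * R ^ n := by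
      rw [← (h w hw).tsum_eq]
      have hn : (fun n => ‖a n‖ * R ^ n) = fun n => ‖a n * w ^ n‖ := by
        ext n
        rw [norm_mul, norm_pow, hw]
      rw [hn] at ha ⊢
      exact norm_tsum_le_tsum_norm ha
    exact mul_le_mul (hB w hw) hfw (norm_nonneg _) ((norm_nonneg _).trans (hB w hw))
  · have := hasSum_integral_of_dominated_convergence (μ := ν)
      (F := fun n w => a n * (g w * w ^ n)) (f := fun w => g w * f w)
      (fun n _ => B * (‖a n‖ * R ^ n))
      (fun n => ((hg.mul (measurable_id.pow_const n)).const_mul (a n)).aestronglyMeasurable)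
      (fun n => by
        filter_upwards [hν.norm_eq] with w hw
        rw [norm_mul, norm_mul, norm_pow, hw]
        nlinarith [mul_le_mul_of_nonneg_right (hB w hw)
          (mul_nonneg (norm_nonneg (a n)) (pow_nonneg hR.le n))])
      (Filter.Eventually.of_forall fun _ => hsum)
      (integrable_const _)
      (by
        filter_upwards [hν.norm_eq] with w hw
        simpa only [mul_left_comm] using (h w hw).mul_left (g w))
    simpa only [integral_const_mul] using this

/-! ### The integrals entering the single layer -/

lemma norm_mul_lt_one {R : ℝ} {q : ℂ} (hq : ‖q‖ * R < 1) {w : ℂ} (hw : ‖w‖ = R) :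
    ‖q * w‖ < 1 := by rwa [norm_mul, hw]

lemma summable_geometric_coeff {R : ℝ} (hR : 0 < R) {q : ℂ} (hq : ‖q‖ * R < 1) :
    Summable fun n : ℕ => ‖q ^ n‖ * R ^ n := by
  simp only [norm_pow, ← mul_pow]
  exact summable_geometric_of_lt_one (by positivity) hq

lemma summable_log_coeff {R : ℝ} (hR : 0 < R) {q : ℂ} (hq : ‖q‖ * R < 1) :
    Summable fun n : ℕ => ‖-(q ^ n / n)‖ * R ^ n := by
  refine (summable_geometric_coeff hR hq).of_nonneg_of_le (fun n => by positivity) fun n => ?_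
  rw [norm_neg, norm_div, Complex.norm_natCast]
  gcongr
  rcases n.eq_zero_or_pos with rfl | hn
  · simp
  · exact div_le_self (norm_nonneg _) (by exact_mod_cast hn)

lemma hasSum_log {R : ℝ} {q : ℂ} (hq : ‖q‖ * R < 1) (w : ℂ) (hw : ‖w‖ = R) :
    HasSum (fun n : ℕ => -(q ^ n / n) * w ^ n) (Complex.log (1 - q * w)) := by
  have := (Complex.hasSum_taylorSeries_neg_log (norm_mul_lt_one hq hw)).neg
  rw [neg_neg] at this
  simpa only [mul_pow, mul_div_right_comm, neg_mul] using this

lemma hasSum_geometric {R : ℝ} {q : ℂ} (hq : ‖q‖ * R < 1) (w : ℂ) (hw : ‖w‖ = R) :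
    HasSum (fun n : ℕ => q ^ n * w ^ n) (1 - q * w)⁻¹ := by
  simpa only [mul_pow] using hasSum_geometric_of_norm_lt_one (norm_mul_lt_one hq hw)

lemma measurable_log_one_sub (q : ℂ) : Measurable fun w : ℂ => Complex.log (1 - q * w) := by
  fun_prop

lemma measurable_inv_one_sub (q : ℂ) : Measurable fun w : ℂ => (1 - q * w)⁻¹ := by
  fun_prop

lemma IsCircleInvariant.integral_id_mul_log {ν : Measure ℂ} {R : ℝ}
    (hν : IsCircleInvariant ν R) (hR : 0 < R) {q : ℂ} (hq : ‖q‖ * R < 1) :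
    Integrable (fun w => w * Complex.log (1 - q * w)) ν ∧
      ∫ w, w * Complex.log (1 - q * w) ∂ν = 0 := by
  obtain ⟨h1, h2⟩ := hν.hasSum_integral hR (measurable_log_one_sub q) measurable_id
    (fun w hw => hw.le) (summable_log_coeff hR hq) (hasSum_log hq)
  refine ⟨h1, h2.unique ?_⟩
  convert hasSum_zero using 2 with n
  have := hν.integral_pow n.succ_ne_zero
  simp only [Nat.succ_eq_add_one, pow_succ'] at this
  simp [this]

/-- Conjugation turns this into `∫ conj w * log (1 - q w)`, which picks out the linear
coefficient `-q` of the logarithm. -/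
lemma IsCircleInvariant.integral_id_mul_conj_log {ν : Measure ℂ} {R : ℝ}
    (hν : IsCircleInvariant ν R) (hR : 0 < R) {q : ℂ} (hq : ‖q‖ * R < 1) :
    Integrable (fun w => w * conj (Complex.log (1 - q * w))) ν ∧
      ∫ w, w * conj (Complex.log (1 - q * w)) ∂ν
        = -(conj q * R ^ 2 * ν.real Set.univ) := by
  obtain ⟨h1, h2⟩ := hν.hasSum_integral hR (measurable_log_one_sub q)
    (g := fun w => conj w) (by fun_prop)
    (fun w hw => (Complex.norm_conj w).trans hw |>.le)
    (summable_log_coeff hR hq) (hasSum_log hq)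
  have hval : ∫ w, conj w * Complex.log (1 - q * w) ∂ν = -(q * R ^ 2 * ν.real Set.univ) := by
    refine h2.unique ?_
    convert hasSum_single 1 ?_ using 1
    · rw [hν.integral_conj_mul_pow]
      simp
      ring
    · intro n hn
      rw [hν.integral_conj_mul_pow, if_neg hn, mul_zero]
  have heq : (fun w => w * conj (Complex.log (1 - q * w)))
      = fun w => conj (conj w * Complex.log (1 - q * w)) := by
    ext w
    simp
  rw [heq]
  refine ⟨(LinearIsometryEquiv.integrable_comp_iff (Complex.conjLIE)).2 h1, ?_⟩
  rw [integral_conj, hval]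
  simp

lemma IsCircleInvariant.integral_sub_mul_geometric {ν : Measure ℂ} {R : ℝ}
    (hν : IsCircleInvariant ν R) (hR : 0 < R) {q : ℂ} (hq : ‖q‖ * R < 1) (z : ℂ) :
    Integrable (fun w => (z - w) * (1 - q * w)⁻¹) ν ∧
      ∫ w, (z - w) * (1 - q * w)⁻¹ ∂ν = z * ν.real Set.univ := by
  have := hν.finite
  obtain ⟨h1, h2⟩ := hν.hasSum_integral hR (measurable_inv_one_sub q)
    (g := fun w => z - w) (by fun_prop) (B := ‖z‖ + R)
    (fun w hw => hw ▸ norm_sub_le z w)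
    (summable_geometric_coeff hR hq) (hasSum_geometric hq)
  refine ⟨h1, h2.unique ?_⟩
  have hpow : ∀ n : ℕ, Integrable (fun w : ℂ => w ^ n) ν := fun n => by
    refine Integrable.of_bound (by fun_prop) (R ^ n) ?_
    filter_upwards [hν.norm_eq] with w hw
    rw [norm_pow, hw]
  have hmom : ∀ n : ℕ, ∫ w, (z - w) * w ^ n ∂ν = z * ∫ w, w ^ n ∂ν := fun n => by
    simp only [sub_mul, ← pow_succ']
    rw [integral_sub ((hpow n).const_mul z) (hpow (n + 1)), integral_const_mul,
      hν.integral_pow n.succ_ne_zero, sub_zero]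
  convert hasSum_single 0 ?_ using 1
  · rw [hmom]
    simp
  · intro n hn
    rw [hmom, hν.integral_pow hn]
    simp

/-! ### The Kelvin kernel in complex notation -/

/-- The single-layer integrand `A log|d| v - B d (d ⬝ v) / |d|²` with `d = z - w`, `v = -i w`, in
complex notation. Here `A`, `B` stand for `τ₁ / (2π)`, `τ₂ / (2π)`. -/
noncomputable def complexLayer (A B : ℝ) (z w : ℂ) : ℂ :=
  ((A * Real.log ‖z - w‖ : ℝ) : ℂ) * (-Complex.I * w)
    - ((B * (((z - w) * conj (-Complex.I * w)).re / ‖z - w‖ ^ 2) : ℝ) : ℂ) * (z - w)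

lemma kernel_eq {R : ℝ} (hR : 0 < R) (A B : ℝ) {z : ℂ} (hz : ‖z‖ < R) {q : ℂ}
    (hq : q * R ^ 2 = conj z) {w : ℂ} (hw : ‖w‖ = R) :
    complexLayer A B z w
      = (-Complex.I * A * Real.log R + Complex.I * B / 2) * w
        + -Complex.I * A / 2 * (w * Complex.log (1 - q * w))
        + -Complex.I * A / 2 * (w * conj (Complex.log (1 - q * w)))
        + Complex.I * B / 2 * ((z - w) * (1 - q * w)⁻¹) := by
  have hRC : (R : ℂ) ≠ 0 := by exact_mod_cast hR.ne'
  have hw0 : w ≠ 0 := by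
    rintro rfl
    simp at hw
    exact hR.ne hw
  have hne : z - w ≠ 0 := by
    intro h
    rw [sub_eq_zero.1 h, hw] at hz
    exact lt_irrefl _ hz
  have hnec : conj (z - w) ≠ 0 := (map_ne_zero _).2 hne
  have hww : w * conj w = (R : ℂ) ^ 2 := by rw [Complex.mul_conj', hw]
  -- `R² (1 - q w) = w conj w - w conj z`
  have hfac : (R : ℂ) ^ 2 * (1 - q * w) = -(w * conj (z - w)) := by
    rw [map_sub]
    linear_combination (-w) * hq - hww
  have hone : 1 - q * w ≠ 0 := by
    intro h
    rw [h, mul_zero, eq_comm, neg_eq_zero] at hfac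
    exact mul_ne_zero hw0 hnec hfac
  have hnorm : ‖z - w‖ = R * ‖1 - q * w‖ := by
    have := congrArg norm hfac
    rw [norm_neg, norm_mul, norm_mul, norm_pow, Complex.norm_conj, hw, Complex.norm_real,
      Real.norm_of_nonneg hR.le] at this
    exact mul_left_cancel₀ hR.ne' (by linear_combination -this)
  have hlog : (Real.log ‖z - w‖ : ℂ) = Real.log R
      + (Complex.log (1 - q * w) + conj (Complex.log (1 - q * w))) / 2 := by
    rw [hnorm, Real.log_mul hR.ne' (norm_ne_zero_iff.2 hone), ← Complex.log_re,
      ← Complex.re_eq_add_conj]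
    push_cast
    rfl
  have hquot : (z - w) * ((((z - w) * conj (-Complex.I * w)).re / ‖z - w‖ ^ 2 : ℝ) : ℂ)
      = -Complex.I / 2 * w - Complex.I / 2 * ((z - w) * (1 - q * w)⁻¹) := by
    have hinv : (1 - q * w)⁻¹ = -(conj w / conj (z - w)) := by
      rw [inv_eq_iff_eq_inv, ← mul_right_inj' (pow_ne_zero 2 hRC), hfac, ← hww]
      have hwc : conj w ≠ 0 := (map_ne_zero _).2 hw0
      field_simp
    rw [hinv]
    push_cast
    rw [Complex.re_eq_add_conj, ← Complex.mul_conj']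
    simp only [map_mul, map_neg, Complex.conj_I, Complex.conj_conj]
    field_simp
    ring
  rw [complexLayer, Complex.ofReal_mul, Complex.ofReal_mul B, hlog]
  linear_combination (-B : ℂ) * hquot

lemma IsCircleInvariant.integral_complexLayer {ν : Measure ℂ} {R : ℝ}
    (hν : IsCircleInvariant ν R) (hR : 0 < R) (A B : ℝ) {z : ℂ} (hz : ‖z‖ < R) :
    ∫ w, complexLayer A B z w ∂ν
      = ((-((A + B) / 2 * ν.real Set.univ) : ℝ) : ℂ) * (-Complex.I * z) := by
  have := hν.finite
  have hRC : (R : ℂ) ≠ 0 := by exact_mod_cast hR.ne'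
  obtain ⟨q, hqdef⟩ : ∃ q : ℂ, q = conj z / R ^ 2 := ⟨_, rfl⟩
  have hqz : q * R ^ 2 = conj z := by
    rw [hqdef]
    field_simp
  have hqR : ‖q‖ * R < 1 := by
    rw [hqdef, norm_div, Complex.norm_conj, norm_pow, Complex.norm_real,
      Real.norm_of_nonneg hR.le]
    rw [div_mul_eq_mul_div, div_lt_one (by positivity)]
    nlinarith
  have hzq : conj q * R ^ 2 = z := by
    have := congrArg conj hqz
    simpa using this
  obtain ⟨i1, v1⟩ := hν.integral_id_mul_log hR hqR
  obtain ⟨i2, v2⟩ := hν.integral_id_mul_conj_log hR hqR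
  obtain ⟨i3, v3⟩ := hν.integral_sub_mul_geometric hR hqR z
  have i0 : Integrable (fun w : ℂ => w) ν := by
    refine Integrable.of_bound (by fun_prop) R ?_
    filter_upwards [hν.norm_eq] with w hw using hw.le
  have v0 : ∫ w, w ∂ν = 0 := by simpa using hν.integral_pow one_ne_zero
  have hcongr := integral_congr_ae (hν.norm_eq.mono fun w hw => kernel_eq hR A B hz hqz hw)
  rw [hcongr, integral_add, integral_add, integral_add]
  · rw [integral_const_mul, integral_const_mul, integral_const_mul, integral_const_mul,
      v0, v1, v2, v3, hzq]
    push_cast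
    ring
  · exact i0.const_mul _
  · exact i1.const_mul _
  · exact (i0.const_mul _).add (i1.const_mul _)
  · exact i2.const_mul _
  · exact ((i0.const_mul _).add (i1.const_mul _)).add (i2.const_mul _)
  · exact i3.const_mul _

/-! ### Hausdorff measure on the circle -/

/-- Finiteness comes from the Lipschitz parametrization of the circle by an interval. -/
lemma isCircleInvariant_hausdorff {R : ℝ} (hR : 0 < R) :
    IsCircleInvariant ((μH[1] : Measure ℂ).restrict (Metric.sphere 0 R)) R where
  finite := by
    refine ⟨?_⟩
    rw [Measure.restrict_apply_univ]
    have h := (lipschitzWith_circleMap 0 R).hausdorffMeasure_image_le (d := 1) zero_le_one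
      (Set.Ioc 0 (2 * Real.pi))
    rw [image_circleMap_Ioc, abs_of_pos hR, hausdorffMeasure_real, Real.volume_Ioc] at h
    refine h.trans_lt (ENNReal.mul_lt_top ?_ ENNReal.ofReal_lt_top)
    simp
  norm_eq := by
    filter_upwards [ae_restrict_mem Metric.isClosed_sphere.measurableSet] with w hw
    simpa using hw
  rot a := by
    have h := ((rotation a).toIsometryEquiv.measurePreserving_hausdorffMeasure 1).restrict_preimage
      (Metric.isClosed_sphere (x := (0 : ℂ)) (ε := R)).measurableSet
    have hpre : (rotation a).toIsometryEquiv ⁻¹' Metric.sphere (0 : ℂ) R = Metric.sphere 0 R := by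
      ext w
      change rotation a w ∈ Metric.sphere (0 : ℂ) R ↔ w ∈ Metric.sphere (0 : ℂ) R
      rw [mem_sphere_zero_iff_norm, mem_sphere_zero_iff_norm, LinearIsometryEquiv.norm_map]
    rw [hpre] at h
    exact h

/-- The coordinates of `complexLayer` are those of the Kelvin matrix applied to the rotational
density. -/
lemma kelvin_mulVec_eq (lam mu : ℝ) (x y : EuclideanSpace ℝ (Fin 2)) :
    (KelvinG0 lam mu (x - y)).mulVec ![y 1, -y 0]
      = Complex.basisOneI.equivFun (complexLayer (tau1 lam mu / (2 * Real.pi))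
          (tau2 lam mu / (2 * Real.pi)) (Complex.orthonormalBasisOneI.repr.symm x)
          (Complex.orthonormalBasisOneI.repr.symm y)) := by
  have hn : ‖Complex.orthonormalBasisOneI.repr.symm x - Complex.orthonormalBasisOneI.repr.symm y‖
      = ‖x - y‖ := by
    rw [← map_sub, LinearIsometryEquiv.norm_map]
  rw [complexLayer, hn, Module.Basis.equivFun_apply, Complex.coe_basisOneI_repr]
  simp only [Complex.orthonormalBasisOneI_repr_symm_apply, Complex.sub_re, Complex.sub_im,
    Complex.re_ofReal_mul, Complex.im_ofReal_mul]
  ext i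
  fin_cases i <;>
  · simp [Matrix.mulVec, dotProduct, Fin.sum_univ_two, KelvinG0]
    ring

/-- The rotational density `y ↦ (y₂, −y₁)` is an eigenfunction of the single-layer
potential associated with the Kelvin matrix on the disk: there is a real constant `c`
(depending only on `λ`, `μ` and `R`) such that for every `x` in the open disk,
`∫_{∂D} G⁰(x − y) (y₂, −y₁) dσ(y) = c • (x₂, −x₁)`. -/
theorem kelvin_single_layer_rotation (R lam mu : ℝ) (hR : 0 < R)
    (hmu : 0 < mu) (hlm : 0 < lam + mu) :
    ∃ c : ℝ, ∀ x ∈ Metric.ball (0 : EuclideanSpace ℝ (Fin 2)) R,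
      (∫ y in Metric.sphere (0 : EuclideanSpace ℝ (Fin 2)) R,
          (KelvinG0 lam mu (x - y)).mulVec ![y 1, -y 0] ∂μH[1])
        = c • ![x 1, -x 0] := by
  refine ⟨-((tau1 lam mu / (2 * Real.pi) + tau2 lam mu / (2 * Real.pi)) / 2 *
    ((μH[1] : Measure ℂ).restrict (Metric.sphere 0 R)).real Set.univ), fun x hx => ?_⟩
  have hxR : ‖Complex.orthonormalBasisOneI.repr.symm x‖ < R := by
    rw [LinearIsometryEquiv.norm_map]
    simpa using hx
  have hint := (isCircleInvariant_hausdorff hR).integral_complexLayer hR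
    (tau1 lam mu / (2 * Real.pi)) (tau2 lam mu / (2 * Real.pi)) hxR
  -- transport of the integral to `ℂ`
  have htr := (Complex.orthonormalBasisOneI.repr.symm.toIsometryEquiv.measurePreserving_hausdorffMeasure
    1).setIntegral_preimage_emb
    Complex.orthonormalBasisOneI.repr.symm.toHomeomorph.measurableEmbedding
    (complexLayer (tau1 lam mu / (2 * Real.pi)) (tau2 lam mu / (2 * Real.pi))
      (Complex.orthonormalBasisOneI.repr.symm x)) (Metric.sphere 0 R)
  have hpre : Complex.orthonormalBasisOneI.repr.symm.toIsometryEquiv ⁻¹' Metric.sphere (0 : ℂ) R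
      = Metric.sphere 0 R := by
    ext y
    simp
  rw [hpre, hint] at htr
  simp only [kelvin_mulVec_eq]
  have hL := Complex.basisOneI.equivFun.toContinuousLinearEquiv.integral_comp_comm
    (μ := (μH[1]).restrict (Metric.sphere (0 : EuclideanSpace ℝ (Fin 2)) R))
    (fun y => complexLayer (tau1 lam mu / (2 * Real.pi)) (tau2 lam mu / (2 * Real.pi))
      (Complex.orthonormalBasisOneI.repr.symm x) (Complex.orthonormalBasisOneI.repr.symm y))
  refine hL.trans ?_
  refine (congrArg _ htr).trans ?_
  rw [← Complex.real_smul, map_smul]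
  congr 1
  rw [LinearEquiv.coe_toContinuousLinearEquiv', Module.Basis.equivFun_apply,
    Complex.coe_basisOneI_repr]
  simp [Complex.orthonormalBasisOneI_repr_symm_apply]
end

section
/- For every constant vector v ∈ ℝ² and every x ∈ ∂D, the function y ↦ G⁰(x − y) v is σ-integrable on ∂D (its singularity at y = x being only logarithmic) and ∫_{∂D} G⁰(x − y) v dσ(y) = (τ₁ R ln R − (τ₂/2) R) v; that is, the identity of the interior single-layer potential on constant densities extends to boundary points of the disk. -/
/-!
Parametrize the circle by `θ ↦ R e^{iθ}`, `0 < θ ≤ 2π`, and write `x = R e^{iα}`. Since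
`x - y = 2R sin ((α - θ)/2) · (-sin ((α + θ)/2), cos ((α + θ)/2))` for `y = R e^{iθ}`, the quotient
`(x - y)ᵢ (x - y)ⱼ / |x - y|²` equals `δᵢⱼ/2 - Pᵢⱼ(α + θ)/2` off the singularity, with `P` the
reflection matrix with entries `± cos`, `sin` (`chord_mul_chord_div`). Over a full period `P`
integrates to zero, so this part contributes `π R δᵢⱼ`. The logarithmic part is the boundary case of
Jensen's formula, `∫ log |R e^{iθ} - x| dθ = 2π log R`, which Mathlib provides together with the
integrability of the logarithm along circles.

Mathlib has no area formula for curves, so most of the work is to show that `μH[1]` on the circle is `R dθ`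
(`hausdorffMeasure_restrict_sphere`). The parametrization is `R`-Lipschitz, which bounds `μH[1]` on
the circle above by the image of `R dθ`. Two finite measures, one below the other, agree once their
total masses do, so it remains to see that the circle has length at least `2πR`. This is done by
cutting it into `n` arcs, on each of which the parametrization is antilipschitz with a constant that
tends to `1 / R` as `n → ∞`.
-/

open MeasureTheory

namespace KelvinCircle
open Set Filter Topology Real

/-! ### Arclength on the circle -/

lemma dist_circleMap (R s t : ℝ) :
    dist (circleMap 0 R s) (circleMap 0 R t) = |R| * |2 * Real.sin ((s - t) / 2)| := by
  have h : circleMap 0 R s - circleMap 0 R t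
      = circleMap 0 R t * (Complex.exp (Complex.I * ((s - t : ℝ) : ℂ)) - 1) := by
    simp only [circleMap_zero, mul_sub, mul_one, mul_assoc, ← Complex.exp_add]
    push_cast
    ring_nf
  rw [dist_eq_norm, h, norm_mul, norm_circleMap_zero, Complex.norm_exp_I_mul_ofReal_sub_one,
    Real.norm_eq_abs]

/-- A chord subtending an angle of at most `h` is almost as long as its arc; this is
`sin u ≥ u - u³ / 6` at half the angle. -/
lemma mul_abs_sub_le_dist_circleMap {R h s t : ℝ} (hR : 0 ≤ R) (hst : |s - t| ≤ h) :
    R * (1 - h ^ 2 / 24) * |s - t| ≤ dist (circleMap 0 R s) (circleMap 0 R t) := by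
  wlog hle : t ≤ s generalizing s t
  · rw [abs_sub_comm, dist_comm]
    exact this (by rwa [abs_sub_comm]) (le_of_not_ge hle)
  have hd : 0 ≤ s - t := sub_nonneg.2 hle
  rw [abs_of_nonneg hd] at hst ⊢
  rw [dist_circleMap, abs_of_nonneg hR, mul_assoc]
  gcongr
  refine le_trans ?_ (le_abs_self _)
  have h1 := Real.sin_ge_sub_cube (x := (s - t) / 2) (by positivity)
  have h2 : (s - t) ^ 2 * (s - t) ≤ h ^ 2 * (s - t) := by gcongr
  nlinarith

/-- The length of an arc is bounded below because the parametrization is antilipschitz on it. -/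
lemma le_hausdorffMeasure_arc {R h a : ℝ} (hR : 0 ≤ R) (hK : 0 < R * (1 - h ^ 2 / 24)) :
    ENNReal.ofReal (R * (1 - h ^ 2 / 24) * h) ≤ μH[1] (circleMap 0 R '' Ioc a (a + h)) := by
  set K : ℝ := R * (1 - h ^ 2 / 24) with hKdef
  let f : Ioc a (a + h) → ℂ := fun t => circleMap 0 R t
  have hf : AntilipschitzWith (K⁻¹).toNNReal f := by
    refine AntilipschitzWith.of_le_mul_dist fun s t => ?_
    rw [Real.coe_toNNReal _ (by positivity), inv_mul_eq_div, le_div_iff₀' hK, Subtype.dist_eq,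
      Real.dist_eq]
    refine mul_abs_sub_le_dist_circleMap hR ?_
    rw [abs_le]
    constructor <;> linarith [s.2.1, s.2.2, t.2.1, t.2.2]
  have h1 := hf.le_hausdorffMeasure_image zero_le_one univ
  have h2 : μH[1] (univ : Set (Ioc a (a + h))) = ENNReal.ofReal h := by
    rw [← (isometry_subtype_coe (s := Ioc a (a + h))).hausdorffMeasure_image (Or.inl zero_le_one),
      image_univ, Subtype.range_coe, hausdorffMeasure_real, Real.volume_Ioc, add_sub_cancel_left]
  have h3 : f '' univ = circleMap 0 R '' Ioc a (a + h) := by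
    rw [image_univ, image_eq_range]
  rw [h2, h3, ENNReal.rpow_one] at h1
  rw [ENNReal.ofReal_mul hK.le]
  refine (mul_le_mul_right h1 _).trans ?_
  rw [← mul_assoc, ENNReal.ofNNReal_toNNReal, ← ENNReal.ofReal_mul hK.le, mul_inv_cancel₀ hK.ne',
    ENNReal.ofReal_one, one_mul]

lemma injOn_circleMap_Ioc {R : ℝ} (hR : R ≠ 0) : InjOn (circleMap 0 R) (Ioc 0 (2 * π)) := by
  have := injOn_circleMap_of_abs_sub_le (a := 0) (b := 2 * π) (c := 0) hR
    (by simp [abs_of_pos pi_pos])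
  rwa [uIoc_of_le two_pi_pos.le] at this

/-- Lower bound for the length of the circle from a subdivision into `n` equal arcs. -/
lemma le_hausdorffMeasure_sphere_aux {R : ℝ} (hR : 0 < R) {n : ℕ} (hn : 2 ≤ n) :
    ENNReal.ofReal (2 * π * R * (1 - (2 * π / n) ^ 2 / 24)) ≤ μH[1] (Metric.sphere (0 : ℂ) R) := by
  have hn' : (2 : ℝ) ≤ n := by exact_mod_cast hn
  set h : ℝ := 2 * π / n with hh
  have hh0 : 0 < h := by positivity
  have hh4 : h ≤ π := by rw [hh, div_le_iff₀ (by positivity)]; nlinarith [pi_pos]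
  have hK : 0 < R * (1 - h ^ 2 / 24) := by
    have : h ^ 2 < 24 := by nlinarith [pi_lt_four]
    have : 0 < 1 - h ^ 2 / 24 := by linarith
    positivity
  have hnh : n * h = 2 * π := by rw [hh]; field_simp
  have hsub : ∀ k ∈ Finset.range n, Ioc (k * h) (k * h + h) ⊆ Ioc 0 (2 * π) := by
    intro k hk
    have : ((k : ℝ) + 1) ≤ n := by exact_mod_cast Finset.mem_range.1 hk
    refine Ioc_subset_Ioc (by positivity) ?_
    rw [← hnh]; nlinarith
  have hmono : Monotone fun k : ℕ => (k : ℝ) * h := fun a b hab => by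
    have : (a : ℝ) ≤ b := by exact_mod_cast hab
    simp only; gcongr
  have hdisj : Set.PairwiseDisjoint (Finset.range n : Set ℕ)
      fun k => circleMap 0 R '' Ioc (k * h) (k * h + h) := by
    intro i hi j hj hij
    have := hmono.pairwise_disjoint_on_Ioc_succ hij
    simp only [Function.onFun, Order.succ_eq_add_one, Nat.cast_add, Nat.cast_one, add_mul,
      one_mul] at this
    exact this.image (injOn_circleMap_Ioc hR.ne') (hsub i hi) (hsub j hj)
  calc ENNReal.ofReal (2 * π * R * (1 - h ^ 2 / 24))
      = ∑ k ∈ Finset.range n, ENNReal.ofReal (R * (1 - h ^ 2 / 24) * h) := by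
        rw [Finset.sum_const, Finset.card_range, ← ENNReal.ofReal_nsmul, nsmul_eq_mul, ← hnh]
        ring_nf
    _ ≤ ∑ k ∈ Finset.range n, μH[1] (circleMap 0 R '' Ioc (k * h) (k * h + h)) :=
        Finset.sum_le_sum fun k _ => le_hausdorffMeasure_arc hR.le hK
    _ = μH[1] (⋃ k ∈ Finset.range n, circleMap 0 R '' Ioc (k * h) (k * h + h)) := by
        refine (measure_biUnion_finset hdisj fun k hk => ?_).symm
        exact measurableSet_Ioc.image_of_continuousOn_injOn (continuous_circleMap 0 R).continuousOn
          ((injOn_circleMap_Ioc hR.ne').mono (hsub k hk))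
    _ ≤ μH[1] (Metric.sphere (0 : ℂ) R) := by
        refine measure_mono (iUnion₂_subset fun k _ => ?_)
        rintro _ ⟨t, -, rfl⟩
        exact circleMap_mem_sphere 0 hR.le t

lemma le_hausdorffMeasure_sphere {R : ℝ} (hR : 0 < R) :
    ENNReal.ofReal (2 * π * R) ≤ μH[1] (Metric.sphere (0 : ℂ) R) := by
  have h0 : Tendsto (fun n : ℕ => 2 * π / (n : ℝ)) atTop (𝓝 0) :=
    tendsto_const_div_atTop_nhds_zero_nat _
  have h1 : Tendsto (fun n : ℕ => ENNReal.ofReal (2 * π * R * (1 - (2 * π / n) ^ 2 / 24))) atTop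
      (𝓝 (ENNReal.ofReal (2 * π * R))) := by
    refine ENNReal.tendsto_ofReal ?_
    simpa using (((h0.pow 2).div_const 24).const_sub 1).const_mul (2 * π * R)
  refine le_of_tendsto h1 ?_
  filter_upwards [eventually_ge_atTop 2] with n hn using le_hausdorffMeasure_sphere_aux hR hn

/-- One-dimensional Hausdorff measure on the circle is `R dθ`. -/
theorem hausdorffMeasure_restrict_sphere {R : ℝ} (hR : 0 < R) :
    (μH[1] : Measure ℂ).restrict (Metric.sphere 0 R)
      = ENNReal.ofReal R • (volume.restrict (Ioc 0 (2 * π))).map (circleMap 0 R) := by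
  have hm : Measurable (circleMap 0 R) := (continuous_circleMap 0 R).measurable
  have htot : (ENNReal.ofReal R • (volume.restrict (Ioc 0 (2 * π))).map (circleMap 0 R)) univ
      = ENNReal.ofReal (2 * π * R) := by
    rw [Measure.smul_apply, Measure.map_apply hm .univ]
    simp [← ENNReal.ofReal_mul hR.le, mul_comm]
  have hle : (μH[1] : Measure ℂ).restrict (Metric.sphere 0 R)
      ≤ ENNReal.ofReal R • (volume.restrict (Ioc 0 (2 * π))).map (circleMap 0 R) := by
    refine Measure.le_iff.2 fun s hs => ?_
    rw [Measure.restrict_apply hs, Measure.smul_apply, Measure.map_apply hm hs,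
      Measure.restrict_apply (hm hs), ← hausdorffMeasure_real]
    have him : s ∩ Metric.sphere 0 R
        = circleMap 0 R '' (circleMap 0 R ⁻¹' s ∩ Ioc 0 (2 * π)) := by
      rw [image_preimage_inter, image_circleMap_Ioc, abs_of_pos hR]
    rw [him]
    refine ((lipschitzWith_circleMap 0 R).hausdorffMeasure_image_le zero_le_one _).trans_eq ?_
    rw [ENNReal.rpow_one, Real.nnabs_of_nonneg hR.le]
    rfl
  have hfin : IsFiniteMeasure ((μH[1] : Measure ℂ).restrict (Metric.sphere 0 R)) :=
    ⟨(hle univ).trans_lt (htot ▸ ENNReal.ofReal_lt_top)⟩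
  have hfin' : IsFiniteMeasure
      (ENNReal.ofReal R • (volume.restrict (Ioc 0 (2 * π))).map (circleMap 0 R)) :=
    ⟨htot ▸ ENNReal.ofReal_lt_top⟩
  refine Measure.eq_of_le_of_measure_univ_eq hle (le_antisymm (hle univ) ?_)
  rw [htot, Measure.restrict_apply_univ]
  exact le_hausdorffMeasure_sphere hR

/-! ### Transfer to the Euclidean plane -/

/-- The point `(R cos θ, R sin θ)`, defined as the image of `circleMap 0 R θ` under the isometry from
`ℂ` to `EuclideanSpace ℝ (Fin 2)`, so that results on complex circles can be carried over. -/
noncomputable def planePoint (R θ : ℝ) : EuclideanSpace ℝ (Fin 2) :=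
  Complex.orthonormalBasisOneI.repr (circleMap 0 R θ)

lemma planePoint_apply_zero (R θ : ℝ) : planePoint R θ 0 = R * Real.cos θ := by
  simp [planePoint, circleMap_zero_re]

lemma planePoint_apply_one (R θ : ℝ) : planePoint R θ 1 = R * Real.sin θ := by
  simp [planePoint, circleMap_zero_im]

lemma norm_planePoint_sub (R α θ : ℝ) :
    ‖planePoint R α - planePoint R θ‖ = ‖circleMap 0 R θ - circleMap 0 R α‖ := by
  rw [planePoint, planePoint, ← map_sub, LinearIsometryEquiv.norm_map, norm_sub_rev]

lemma continuous_planePoint (R : ℝ) : Continuous (planePoint R) :=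
  (LinearIsometryEquiv.continuous _).comp (continuous_circleMap 0 R)

theorem hausdorffMeasure_restrict_sphere_plane {R : ℝ} (hR : 0 < R) :
    (μH[1] : Measure (EuclideanSpace ℝ (Fin 2))).restrict (Metric.sphere 0 R)
      = ENNReal.ofReal R • (volume.restrict (Ioc 0 (2 * π))).map (planePoint R) := by
  let e := Complex.orthonormalBasisOneI.repr
  have he : MeasurePreserving e μH[1] μH[1] :=
    e.toIsometryEquiv.measurePreserving_hausdorffMeasure 1
  have h1 := (he.restrict_preimage (s := Metric.sphere 0 R)
    Metric.isClosed_sphere.measurableSet).map_eq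
  have h2 : e ⁻¹' Metric.sphere 0 R = Metric.sphere 0 R := by
    ext z; simp
  rw [h2, hausdorffMeasure_restrict_sphere hR, Measure.map_smul,
    Measure.map_map he.measurable (continuous_circleMap 0 R).measurable] at h1
  exact h1.symm

/-- Integration over the circle in the angular variable. The integrand in `θ` is only required to
agree almost everywhere with `g`, so that the value of the kernel at its singularity is
irrelevant. -/
lemma integral_sphere {R : ℝ} (hR : 0 < R) {f : EuclideanSpace ℝ (Fin 2) → ℝ} (hf : Measurable f)
    {g : ℝ → ℝ} (hg : IntervalIntegrable g volume 0 (2 * π))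
    (hfg : ∀ᵐ θ, f (planePoint R θ) = g θ) :
    IntegrableOn f (Metric.sphere 0 R) μH[1] ∧
      ∫ y in Metric.sphere 0 R, f y ∂μH[1] = R * ∫ θ in 0..2 * π, g θ := by
  have hm := (continuous_planePoint R).measurable
  have hfg' := ae_restrict_of_ae (s := Ioc 0 (2 * π)) hfg
  rw [intervalIntegrable_iff_integrableOn_Ioc_of_le two_pi_pos.le] at hg
  rw [IntegrableOn, hausdorffMeasure_restrict_sphere_plane hR]
  constructor
  · refine Integrable.smul_measure ?_ ENNReal.ofReal_ne_top
    rw [integrable_map_measure hf.aestronglyMeasurable hm.aemeasurable]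
    exact hg.congr (hfg'.mono fun θ h => h.symm)
  · rw [integral_smul_measure, integral_map hm.aemeasurable hf.aestronglyMeasurable,
      integral_congr_ae hfg', ENNReal.toReal_ofReal hR.le,
      intervalIntegral.integral_of_le two_pi_pos.le, smul_eq_mul]

/-! ### Angular integrals and the kernel entries -/

lemma integral_cos_add (α : ℝ) : ∫ θ in 0..2 * π, Real.cos (α + θ) = 0 := by
  rw [intervalIntegral.integral_comp_add_left (fun t => Real.cos t)]
  simp

lemma integral_sin_add (α : ℝ) : ∫ θ in 0..2 * π, Real.sin (α + θ) = 0 := by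
  rw [intervalIntegral.integral_comp_add_left (fun t => Real.sin t)]
  simp

/-- The matrix of the reflection of the plane across the line through `0` at angle `t / 2`. -/
noncomputable def reflEntry (t : ℝ) : Matrix (Fin 2) (Fin 2) ℝ :=
  !![Real.cos t, Real.sin t; Real.sin t, -Real.cos t]

lemma continuous_reflEntry (α : ℝ) (i j : Fin 2) : Continuous fun θ => reflEntry (α + θ) i j := by
  fin_cases i <;> fin_cases j <;> simp [reflEntry] <;> fun_prop

lemma integral_reflEntry (α : ℝ) (i j : Fin 2) : ∫ θ in 0..2 * π, reflEntry (α + θ) i j = 0 := by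
  fin_cases i <;> fin_cases j <;> simp [reflEntry, integral_cos_add, integral_sin_add]

/-- The tensor square of the unit chord direction: the chord from `R e^{iθ}` to `R e^{iα}` is
orthogonal to the direction of angle `(α + θ) / 2`. -/
lemma chord_mul_chord_div {R α θ : ℝ} (h : planePoint R α ≠ planePoint R θ) (i j : Fin 2) :
    (planePoint R α - planePoint R θ) i * (planePoint R α - planePoint R θ) j
        / ‖planePoint R α - planePoint R θ‖ ^ 2
      = (if i = j then 1 / 2 else 0) - 1 / 2 * reflEntry (α + θ) i j := by
  have h0 : ‖planePoint R α - planePoint R θ‖ ^ 2 ≠ 0 :=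
    pow_ne_zero 2 (norm_ne_zero_iff.2 (sub_ne_zero.2 h))
  rw [div_eq_iff h0, EuclideanSpace.norm_sq_eq, Fin.sum_univ_two]
  have hα := Real.sin_sq_add_cos_sq α
  have hθ := Real.sin_sq_add_cos_sq θ
  fin_cases i <;> fin_cases j <;>
    simp [reflEntry, planePoint_apply_zero, planePoint_apply_one, Real.cos_add, Real.sin_add] <;>
    grind

/-- The logarithmic potential of the circle at one of its own points. -/
lemma integral_log_chord (R α : ℝ) :
    ∫ θ in 0..2 * π, Real.log ‖circleMap 0 R θ - circleMap 0 R α‖ = 2 * π * Real.log R := by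
  have h := circleAverage_log_norm_sub_const_of_mem_closedBall (a := circleMap 0 R α) (c := 0)
    (R := R) (by simp)
  rw [circleAverage_def, smul_eq_mul, inv_mul_eq_iff_eq_mul₀ two_pi_pos.ne'] at h
  exact h

lemma measurable_kelvinG0_sub (lam mu : ℝ) (x : EuclideanSpace ℝ (Fin 2)) (i j : Fin 2) :
    Measurable fun y => KelvinG0 lam mu (x - y) i j := by
  unfold KelvinG0
  have hn : Measurable fun y : EuclideanSpace ℝ (Fin 2) => ‖x - y‖ := by fun_prop
  have hc (k : Fin 2) : Measurable fun y : EuclideanSpace ℝ (Fin 2) => (x - y) k := by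
    simp only [PiLp.sub_apply]; fun_prop
  refine Measurable.sub (Measurable.const_mul ?_ _) (Measurable.const_mul ?_ _)
  · split_ifs
    · exact Real.measurable_log.comp hn
    · exact measurable_const
  · exact ((hc i).mul (hc j)).div (hn.pow_const 2)

/-- The single-layer integral of one entry of the Kelvin matrix. -/
theorem integral_kelvinG0_entry {R : ℝ} (hR : 0 < R) (lam mu α : ℝ) (i j : Fin 2) :
    IntegrableOn (fun y => KelvinG0 lam mu (planePoint R α - y) i j) (Metric.sphere 0 R) μH[1] ∧
      ∫ y in Metric.sphere 0 R, KelvinG0 lam mu (planePoint R α - y) i j ∂μH[1]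
        = (tau1 lam mu * R * Real.log R - tau2 lam mu / 2 * R) * (if i = j then 1 else 0) := by
  set a := tau1 lam mu / (2 * π) with ha
  set b := tau2 lam mu / (2 * π) with hb
  have hL : IntervalIntegrable (fun θ => Real.log ‖circleMap 0 R θ - circleMap 0 R α‖) volume
      0 (2 * π) := circleIntegrable_log_norm_sub_const R
  have hA : IntervalIntegrable
      (fun θ => a * ((if i = j then 1 else 0) * Real.log ‖circleMap 0 R θ - circleMap 0 R α‖))
      volume 0 (2 * π) := (hL.const_mul _).const_mul _
  have hP : IntervalIntegrable (fun θ => reflEntry (α + θ) i j) volume 0 (2 * π) :=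
    (continuous_reflEntry α i j).intervalIntegrable _ _
  have hC : IntervalIntegrable (fun _ : ℝ => if i = j then (1 / 2 : ℝ) else 0) volume
      0 (2 * π) := intervalIntegrable_const
  have hB : IntervalIntegrable
      (fun θ => b * ((if i = j then 1 / 2 else 0) - 1 / 2 * reflEntry (α + θ) i j))
      volume 0 (2 * π) := (hC.sub (hP.const_mul _)).const_mul _
  -- Only countably many angles give the singular point.
  have hne : ∀ᵐ θ : ℝ, planePoint R α ≠ planePoint R θ := by
    have hc := ((countable_singleton (circleMap 0 R α)).preimage_circleMap 0 hR.ne')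
    filter_upwards [compl_mem_ae_iff.2 (hc.measure_zero volume)] with θ hθ heq
    exact hθ (Complex.orthonormalBasisOneI.repr.injective heq).symm
  obtain ⟨h1, h2⟩ := integral_sphere hR (measurable_kelvinG0_sub lam mu (planePoint R α) i j)
    (hA.sub hB) (by
      filter_upwards [hne] with θ hθ
      rw [KelvinG0, chord_mul_chord_div hθ, norm_planePoint_sub, ite_mul, one_mul, zero_mul])
  refine ⟨h1, h2.trans ?_⟩
  rw [intervalIntegral.integral_sub hA hB, intervalIntegral.integral_const_mul,
    intervalIntegral.integral_const_mul, intervalIntegral.integral_const_mul,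
    intervalIntegral.integral_sub hC (hP.const_mul _), intervalIntegral.integral_const_mul,
    integral_reflEntry, integral_log_chord, intervalIntegral.integral_const, smul_eq_mul]
  have := pi_pos
  split_ifs
  · rw [ha, hb]; field_simp; ring
  · simp

end KelvinCircle

/-- For every constant vector `v ∈ ℝ²` and every `x` on the boundary circle `∂D`, the
function `y ↦ G⁰(x − y) v` is integrable on `∂D` with respect to one-dimensional
Hausdorff measure, and `∫_{∂D} G⁰(x − y) v dσ(y) = (τ₁ R ln R − (τ₂/2) R) v`;
i.e. the interior single-layer identity on constants extends to boundary points. -/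
theorem kelvin_single_layer_constant_boundary (R lam mu : ℝ) (hR : 0 < R)
    (hmu : 0 < mu) (hlm : 0 < lam + mu)
    (v : Fin 2 → ℝ) (x : EuclideanSpace ℝ (Fin 2))
    (hx : x ∈ Metric.sphere (0 : EuclideanSpace ℝ (Fin 2)) R) :
    IntegrableOn (fun y => (KelvinG0 lam mu (x - y)).mulVec v)
        (Metric.sphere (0 : EuclideanSpace ℝ (Fin 2)) R) μH[1]
    ∧ (∫ y in Metric.sphere (0 : EuclideanSpace ℝ (Fin 2)) R,
          (KelvinG0 lam mu (x - y)).mulVec v ∂μH[1])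
        = (tau1 lam mu * R * Real.log R - tau2 lam mu / 2 * R) • v := by
  obtain ⟨α, rfl⟩ : ∃ α, KelvinCircle.planePoint R α = x := by
    have hz : Complex.orthonormalBasisOneI.repr.symm x ∈ Metric.sphere (0 : ℂ) |R| := by
      rw [abs_of_pos hR, mem_sphere_zero_iff_norm, LinearIsometryEquiv.norm_map]
      exact mem_sphere_zero_iff_norm.1 hx
    rw [← range_circleMap] at hz
    obtain ⟨α, hα⟩ := hz
    exact ⟨α, by rw [KelvinCircle.planePoint, hα, LinearIsometryEquiv.apply_symm_apply]⟩
  have hentry := KelvinCircle.integral_kelvinG0_entry hR lam mu α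
  have hterm (i j : Fin 2) := (hentry i j).1.mul_const (v j)
  have hint (i : Fin 2) : IntegrableOn
      (fun y => (KelvinG0 lam mu (KelvinCircle.planePoint R α - y)).mulVec v i)
      (Metric.sphere 0 R) μH[1] := by
    simp only [Matrix.mulVec, dotProduct]
    exact integrable_finsetSum _ fun j _ => hterm i j
  refine ⟨Integrable.of_eval hint, ?_⟩
  ext i
  rw [eval_integral hint]
  simp only [Matrix.mulVec, dotProduct]
  rw [integral_finsetSum _ fun j _ => hterm i j]
  simp only [integral_mul_const, (hentry i _).2]
  simp
end

section
/- Let u : ℝ² → ℝ² be of class C² on an open neighborhood of the closed disk D̄, and suppose L^{λ,μ}u = 0 everywhere in D and ∂_ν u = 0 everywhere on ∂D. Then there exist constants a, b, c ∈ ℝ such that u(x) = (a + c x₂, b − c x₁) for all x ∈ D̄; in particular, the solution space of the homogeneous Neumann problem for the Lamé system on the disk is spanned by the three rigid motions (1,0), (0,1) and (x₂, −x₁). -/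
/-!
The proof is the energy argument. Let `σ = λ (div u) I + μ (∇u + ∇uᵀ)` be the stress
tensor. Since `L u = div σ = 0` and `σ` is symmetric, the field `σ u` satisfies, in the disk,
`div (σ u) = σ : ∇u = (λ+μ) (∂₁u₁ + ∂₂u₂)² + μ ((∂₁u₁ - ∂₂u₂)² + (∂₂u₁ + ∂₁u₂)²) ≥ 0`,
while its normal component on the circle is `u · ∂_ν u = 0`. The divergence theorem on the disk
(`div_eq_zero_of_nonneg`, obtained from the divergence theorem on a rectangle through polar
coordinates) therefore forces `div (σ u) = 0`, so that the strain `∇u + ∇uᵀ` vanishes in the disk.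

By symmetry of second derivatives (`pd_comm`) the remaining entry `∂₂u₁ = -∂₁u₂` then has zero
gradient, hence is a constant `c`; consequently `u₁ - c x₂` and `u₂ + c x₁` have zero gradient and
are constants on the open disk, and on the closed disk by continuity.
-/

open MeasureTheory Matrix

/-- Partial derivative `∂f/∂x_j` of a scalar function on `ℝ²`. -/
noncomputable def pd (f : EuclideanSpace ℝ (Fin 2) → ℝ) (j : Fin 2)
    (x : EuclideanSpace ℝ (Fin 2)) : ℝ :=
  fderiv ℝ f x (EuclideanSpace.single j 1)

/-- Displacement gradient matrix `(∇u)_{ij} = ∂_{x_j} u_i`. -/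
noncomputable def gradMat (u : EuclideanSpace ℝ (Fin 2) → EuclideanSpace ℝ (Fin 2))
    (x : EuclideanSpace ℝ (Fin 2)) : Matrix (Fin 2) (Fin 2) ℝ :=
  fun i j => pd (fun y => u y i) j x

/-- Divergence of a vector field on `ℝ²`. -/
noncomputable def divg (u : EuclideanSpace ℝ (Fin 2) → EuclideanSpace ℝ (Fin 2))
    (x : EuclideanSpace ℝ (Fin 2)) : ℝ :=
  pd (fun y => u y 0) 0 x + pd (fun y => u y 1) 1 x

/-- The Lamé operator, componentwise:
`(L^{λ,μ}u)_i = μ Δu_i + (λ+μ) ∂_{x_i}(div u)`. -/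
noncomputable def lameOp (lam mu : ℝ)
    (u : EuclideanSpace ℝ (Fin 2) → EuclideanSpace ℝ (Fin 2))
    (x : EuclideanSpace ℝ (Fin 2)) : Fin 2 → ℝ :=
  fun i => mu * (∑ j : Fin 2, pd (fun y => pd (fun z => u z i) j y) j x)
    + (lam + mu) * pd (fun y => divg u y) i x

/-- The conormal derivative (traction) on the circle of radius `R`, with outward
unit normal `ν(x) = x/R`:
`∂_ν u = λ (div u) ν + μ (∇u + ∇uᵀ) ν`. -/
noncomputable def traction (lam mu R : ℝ)
    (u : EuclideanSpace ℝ (Fin 2) → EuclideanSpace ℝ (Fin 2))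
    (x : EuclideanSpace ℝ (Fin 2)) : Fin 2 → ℝ :=
  fun i => lam * divg u x * (x i / R)
    + mu * ((gradMat u x + (gradMat u x)ᵀ).mulVec (fun j => x j / R)) i

open Set Filter Topology

/-! ### Calculus of partial derivatives -/

/-- The directional derivative expressed through the two partial derivatives. -/
lemma fderiv_apply_eq_pd (f : EuclideanSpace ℝ (Fin 2) → ℝ) (x v : EuclideanSpace ℝ (Fin 2)) :
    fderiv ℝ f x v = v 0 * pd f 0 x + v 1 * pd f 1 x := by
  have hv : v = v 0 • EuclideanSpace.single (0 : Fin 2) (1 : ℝ)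
      + v 1 • EuclideanSpace.single (1 : Fin 2) (1 : ℝ) := by
    ext i; fin_cases i <;> simp
  conv_lhs => rw [hv]
  simp only [map_add, map_smul, smul_eq_mul, pd]

lemma pd_lincomb {f g : EuclideanSpace ℝ (Fin 2) → ℝ} {x : EuclideanSpace ℝ (Fin 2)}
    (α β : ℝ) (j : Fin 2) (hf : DifferentiableAt ℝ f x) (hg : DifferentiableAt ℝ g x) :
    pd (fun y => α * f y + β * g y) j x = α * pd f j x + β * pd g j x := by
  have h := ((hf.hasFDerivAt.const_mul α).add (hg.hasFDerivAt.const_mul β)).fderiv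
  have h' : fderiv ℝ (fun y => α * f y + β * g y) x = α • fderiv ℝ f x + β • fderiv ℝ g x := h
  simp [pd, h']

lemma pd_dot {s f t g : EuclideanSpace ℝ (Fin 2) → ℝ} {x : EuclideanSpace ℝ (Fin 2)} (j : Fin 2)
    (hs : DifferentiableAt ℝ s x) (hf : DifferentiableAt ℝ f x)
    (ht : DifferentiableAt ℝ t x) (hg : DifferentiableAt ℝ g x) :
    pd (fun y => s y * f y + t y * g y) j x
      = (s x * pd f j x + pd s j x * f x) + (t x * pd g j x + pd t j x * g x) := by
  have h := ((hs.hasFDerivAt.mul hf.hasFDerivAt).add (ht.hasFDerivAt.mul hg.hasFDerivAt)).fderiv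
  have h' : fderiv ℝ (fun y => s y * f y + t y * g y) x
    = (s x • fderiv ℝ f x + f x • fderiv ℝ s x) + (t x • fderiv ℝ g x + g x • fderiv ℝ t x) := h
  simp [pd, h']
  ring

lemma contDiffOn_pd {f : EuclideanSpace ℝ (Fin 2) → ℝ} {U : Set (EuclideanSpace ℝ (Fin 2))}
    {m n : WithTop ℕ∞} (hU : IsOpen U) (hf : ContDiffOn ℝ n f U) (hmn : m + 1 ≤ n) (j : Fin 2) :
    ContDiffOn ℝ m (pd f j) U :=
  (hf.fderiv_of_isOpen hU hmn).clm_apply contDiffOn_const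

/-- Equality of mixed second partial derivatives of a `C²` function. -/
lemma pd_comm {f : EuclideanSpace ℝ (Fin 2) → ℝ} {U : Set (EuclideanSpace ℝ (Fin 2))}
    (hU : IsOpen U) (hf : ContDiffOn ℝ 2 f U) {x : EuclideanSpace ℝ (Fin 2)} (hx : x ∈ U)
    (i j : Fin 2) : pd (pd f i) j x = pd (pd f j) i x := by
  have hfx : ContDiffAt ℝ 2 f x := hf.contDiffAt (hU.mem_nhds hx)
  have hd : DifferentiableAt ℝ (fderiv ℝ f) x :=
    (hfx.fderiv_right (m := 1) (by norm_num)).differentiableAt (by norm_num)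
  have key : ∀ k l : Fin 2, pd (pd f k) l x
      = fderiv ℝ (fderiv ℝ f) x (EuclideanSpace.single l 1) (EuclideanSpace.single k 1) := by
    intro k l
    have h := (hd.hasFDerivAt.clm_apply
      (hasFDerivAt_const (EuclideanSpace.single k (1 : ℝ)) x)).fderiv
    have h' : fderiv ℝ (pd f k) x = _ := h
    rw [pd, h']
    simp
  rw [key, key]
  exact (hfx.isSymmSndFDerivAt (by simp)).eq _ _

/-! ### Polar coordinates -/

/-- Polar coordinates, as a map of the whole `(r, θ)`-plane. -/
noncomputable def polarMap (z : ℝ × ℝ) : EuclideanSpace ℝ (Fin 2) :=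
  !₂[z.1 * Real.cos z.2, z.1 * Real.sin z.2]

lemma contDiff_polarMap : ContDiff ℝ 1 polarMap := by
  unfold polarMap
  rw [contDiff_euclidean]
  intro i
  fin_cases i
  · simp; fun_prop
  · simp; fun_prop

lemma norm_polarMap (z : ℝ × ℝ) (h : 0 ≤ z.1) : ‖polarMap z‖ = z.1 := by
  rw [EuclideanSpace.norm_eq, Fin.sum_univ_two, Real.sqrt_eq_iff_mul_self_eq (by positivity) h]
  simp only [polarMap, Real.norm_eq_abs, sq_abs]
  simp
  linear_combination z.1 ^ 2 * Real.sin_sq_add_cos_sq z.2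

lemma exists_polarMap (x : EuclideanSpace ℝ (Fin 2)) :
    ∃ t ∈ Icc (-Real.pi) Real.pi, polarMap (‖x‖, t) = x := by
  set w : ℂ := ⟨x 0, x 1⟩ with hw
  have hn : ‖x‖ = ‖w‖ := by
    rw [EuclideanSpace.norm_eq, Fin.sum_univ_two, Complex.norm_eq_sqrt_sq_add_sq]
    simp [hw]
  refine ⟨w.arg, ⟨(Complex.neg_pi_lt_arg w).le, Complex.arg_le_pi w⟩, ?_⟩
  ext i
  fin_cases i
  · simp [polarMap, hn, Complex.norm_mul_cos_arg, hw]
  · simp [polarMap, hn, Complex.norm_mul_sin_arg, hw]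

lemma hasDerivAt_vec {a b : ℝ → ℝ} {a' b' r : ℝ} (ha : HasDerivAt a a' r)
    (hb : HasDerivAt b b' r) :
    HasDerivAt (fun s => (!₂[a s, b s] : EuclideanSpace ℝ (Fin 2))) (!₂[a', b']) r := by
  have h : HasDerivAt (fun s => ![a s, b s]) (![a', b']) r := by
    rw [hasDerivAt_pi]
    intro i
    fin_cases i
    · simpa using ha
    · simpa using hb
  exact (PiLp.continuousLinearEquiv 2 ℝ
    (fun _ : Fin 2 => ℝ)).symm.hasFDerivAt.comp_hasDerivAt r h

lemma hasDerivAt_polar_radial {f : EuclideanSpace ℝ (Fin 2) → ℝ} {r t : ℝ}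
    (hf : DifferentiableAt ℝ f (polarMap (r, t))) :
    HasDerivAt (fun s => f (polarMap (s, t)))
      (Real.cos t * pd f 0 (polarMap (r, t)) + Real.sin t * pd f 1 (polarMap (r, t))) r := by
  have hp : HasDerivAt (fun s => polarMap (s, t)) (!₂[Real.cos t, Real.sin t]) r := by
    refine hasDerivAt_vec ?_ ?_
    · simpa using (hasDerivAt_id r).mul_const (Real.cos t)
    · simpa using (hasDerivAt_id r).mul_const (Real.sin t)
  have h := hf.hasFDerivAt.comp_hasDerivAt r hp
  rw [fderiv_apply_eq_pd] at h
  exact h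

lemma hasDerivAt_polar_angular {f : EuclideanSpace ℝ (Fin 2) → ℝ} {r t : ℝ}
    (hf : DifferentiableAt ℝ f (polarMap (r, t))) :
    HasDerivAt (fun s => f (polarMap (r, s)))
      (-(r * Real.sin t) * pd f 0 (polarMap (r, t))
        + r * Real.cos t * pd f 1 (polarMap (r, t))) t := by
  have hp : HasDerivAt (fun s => polarMap (r, s)) (!₂[-(r * Real.sin t), r * Real.cos t]) t := by
    refine hasDerivAt_vec ?_ ?_
    · simpa using (Real.hasDerivAt_cos t).const_mul r
    · simpa using (Real.hasDerivAt_sin t).const_mul r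
  have h := hf.hasFDerivAt.comp_hasDerivAt t hp
  rw [fderiv_apply_eq_pd] at h
  exact h

lemma fderiv_apply_fst {G : ℝ × ℝ → ℝ} {r t d : ℝ} (hG : DifferentiableAt ℝ G (r, t))
    (h : HasDerivAt (fun s => G (s, t)) d r) : fderiv ℝ G (r, t) (1, 0) = d := by
  have hc : HasDerivAt (fun s : ℝ => (s, t)) ((1 : ℝ), (0 : ℝ)) r :=
    (hasDerivAt_id r).prodMk (hasDerivAt_const r t)
  exact (hG.hasFDerivAt.comp_hasDerivAt r hc).unique h

lemma fderiv_apply_snd {G : ℝ × ℝ → ℝ} {r t d : ℝ} (hG : DifferentiableAt ℝ G (r, t))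
    (h : HasDerivAt (fun s => G (r, s)) d t) : fderiv ℝ G (r, t) (0, 1) = d := by
  have hc : HasDerivAt (fun s : ℝ => (r, s)) ((0 : ℝ), (1 : ℝ)) t :=
    (hasDerivAt_const t r).prodMk (hasDerivAt_id t)
  exact (hG.hasFDerivAt.comp_hasDerivAt t hc).unique h

/-! ### Divergence theorem on the disk -/

/-- The form of the divergence theorem on the disk that is needed: a `C¹` field `(P, Q)` with
vanishing normal component on the circle and nonnegative divergence is divergence free. In polar
coordinates `r div (P, Q) = ∂_r (r F_r) + ∂_θ F_θ`, so the divergence theorem on the rectangle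
`[0, R] × [-π, π]` shows that `r div (P, Q)` has integral zero: the boundary terms vanish at
`r = R` by hypothesis and at `r = 0` because of the factor `r`, and they cancel at `θ = ±π` by
periodicity. -/
lemma div_eq_zero_of_nonneg {R : ℝ} (hR : 0 < R) {U : Set (EuclideanSpace ℝ (Fin 2))}
    (hU : IsOpen U) (hDU : Metric.closedBall (0 : EuclideanSpace ℝ (Fin 2)) R ⊆ U)
    {P Q : EuclideanSpace ℝ (Fin 2) → ℝ} (hP : ContDiffOn ℝ 1 P U) (hQ : ContDiffOn ℝ 1 Q U)
    (hnn : ∀ x ∈ Metric.ball (0 : EuclideanSpace ℝ (Fin 2)) R, 0 ≤ pd P 0 x + pd Q 1 x)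
    (hbd : ∀ x ∈ Metric.sphere (0 : EuclideanSpace ℝ (Fin 2)) R, P x * x 0 + Q x * x 1 = 0) :
    ∀ x ∈ Metric.ball (0 : EuclideanSpace ℝ (Fin 2)) R, pd P 0 x + pd Q 1 x = 0 := by
  set W : EuclideanSpace ℝ (Fin 2) → ℝ := fun x => pd P 0 x + pd Q 1 x with hWdef
  have hWc : ContinuousOn W U :=
    (contDiffOn_pd (m := 0) hU hP (by norm_num) 0).continuousOn.add
      (contDiffOn_pd (m := 0) hU hQ (by norm_num) 1).continuousOn
  have hnn' : ∀ x ∈ Metric.closedBall (0 : EuclideanSpace ℝ (Fin 2)) R, 0 ≤ W x := by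
    intro x hx
    have hxc : x ∈ closure (Metric.ball (0 : EuclideanSpace ℝ (Fin 2)) R) := by
      rwa [closure_ball _ hR.ne']
    exact ContinuousWithinAt.closure_le hxc continuousWithinAt_const
      ((hWc x (hDU hx)).mono (Metric.ball_subset_closedBall.trans hDU)) hnn
  set V : Set (ℝ × ℝ) := polarMap ⁻¹' U with hVdef
  have hV : IsOpen V := hU.preimage contDiff_polarMap.continuous
  have hball : ∀ z ∈ Icc ((0 : ℝ), -Real.pi) (R, Real.pi),
      polarMap z ∈ Metric.closedBall (0 : EuclideanSpace ℝ (Fin 2)) R := by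
    intro z hz
    rw [mem_closedBall_zero_iff, norm_polarMap z hz.1.1]
    exact hz.2.1
  have hsub : Icc ((0 : ℝ), -Real.pi) (R, Real.pi) ⊆ V := fun z hz => hDU (hball z hz)
  have hle : ((0 : ℝ), -Real.pi) ≤ (R, Real.pi) := ⟨hR.le, by simp; linarith [Real.pi_pos]⟩
  have hPp : ContDiffOn ℝ 1 (fun z => P (polarMap z)) V :=
    hP.comp contDiff_polarMap.contDiffOn (fun z hz => hz)
  have hQp : ContDiffOn ℝ 1 (fun z => Q (polarMap z)) V :=
    hQ.comp contDiff_polarMap.contDiffOn (fun z hz => hz)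
  have hWp : ContinuousOn (fun z => W (polarMap z)) V :=
    hWc.comp contDiff_polarMap.continuous.continuousOn (fun z hz => hz)
  have hcos : ContDiff ℝ 1 (fun z : ℝ × ℝ => Real.cos z.2) := by fun_prop
  have hsin : ContDiff ℝ 1 (fun z : ℝ × ℝ => Real.sin z.2) := by fun_prop
  -- `G = r F_r` and `H = F_θ` in polar coordinates
  set G : ℝ × ℝ → ℝ := fun z =>
    z.1 * (P (polarMap z) * Real.cos z.2 + Q (polarMap z) * Real.sin z.2) with hG
  set H : ℝ × ℝ → ℝ := fun z =>
    Q (polarMap z) * Real.cos z.2 - P (polarMap z) * Real.sin z.2 with hH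
  have hGd : ContDiffOn ℝ 1 G V :=
    contDiff_fst.contDiffOn.mul ((hPp.mul hcos.contDiffOn).add (hQp.mul hsin.contDiffOn))
  have hHd : ContDiffOn ℝ 1 H V := (hQp.mul hcos.contDiffOn).sub (hPp.mul hsin.contDiffOn)
  have hGdiff : ∀ z ∈ V, DifferentiableAt ℝ G z := fun z hz =>
    (hGd.contDiffAt (hV.mem_nhds hz)).differentiableAt (by norm_num)
  have hHdiff : ∀ z ∈ V, DifferentiableAt ℝ H z := fun z hz =>
    (hHd.contDiffAt (hV.mem_nhds hz)).differentiableAt (by norm_num)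
  have hdiv : ∀ z ∈ V, fderiv ℝ G z (1, 0) + fderiv ℝ H z (0, 1) = z.1 * W (polarMap z) := by
    rintro ⟨r, t⟩ hz
    have hPd : DifferentiableAt ℝ P (polarMap (r, t)) :=
      (hP.contDiffAt (hU.mem_nhds hz)).differentiableAt (by norm_num)
    have hQd : DifferentiableAt ℝ Q (polarMap (r, t)) :=
      (hQ.contDiffAt (hU.mem_nhds hz)).differentiableAt (by norm_num)
    have h1 := (hasDerivAt_id r).mul (((hasDerivAt_polar_radial hPd).mul_const (Real.cos t)).add
      ((hasDerivAt_polar_radial hQd).mul_const (Real.sin t)))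
    have h2 := ((hasDerivAt_polar_angular hQd).mul (Real.hasDerivAt_cos t)).sub
      ((hasDerivAt_polar_angular hPd).mul (Real.hasDerivAt_sin t))
    rw [fderiv_apply_fst (hGdiff _ hz) h1, fderiv_apply_snd (hHdiff _ hz) h2]
    simp only [hWdef, id, Pi.add_apply]
    linear_combination r * (pd P 0 (polarMap (r, t)) + pd Q 1 (polarMap (r, t)))
      * Real.sin_sq_add_cos_sq t
  have hrW : ContinuousOn (fun z : ℝ × ℝ => z.1 * W (polarMap z)) V :=
    continuous_fst.continuousOn.mul hWp
  have hint : IntegrableOn (fun z : ℝ × ℝ => z.1 * W (polarMap z))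
      (Icc ((0 : ℝ), -Real.pi) (R, Real.pi)) :=
    (hrW.mono hsub).integrableOn_compact isCompact_Icc
  have hopen : Ioo (0 : ℝ) R ×ˢ Ioo (-Real.pi) Real.pi ⊆ V := fun z hz =>
    hsub ⟨⟨hz.1.1.le, hz.2.1.le⟩, ⟨hz.1.2.le, hz.2.2.le⟩⟩
  have hthm := integral_divergence_prod_Icc_of_hasFDerivAt_of_le G H (fderiv ℝ G) (fderiv ℝ H)
    ((0 : ℝ), -Real.pi) (R, Real.pi) hle (hGd.continuousOn.mono hsub) (hHd.continuousOn.mono hsub)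
    (fun z hz => (hGdiff z (hopen hz)).hasFDerivAt) (fun z hz => (hHdiff z (hopen hz)).hasFDerivAt)
    (hint.congr_fun (fun z hz => (hdiv z (hsub hz)).symm) measurableSet_Icc)
  have hGR : ∀ t, G (R, t) = 0 := by
    intro t
    have h := hbd (polarMap (R, t)) (by
      rw [mem_sphere_zero_iff_norm, norm_polarMap _ hR.le])
    simp only [polarMap] at h
    simp only [hG, polarMap]
    simp at h
    linear_combination h
  have hper : ∀ r, H (r, Real.pi) = H (r, -Real.pi) := by
    intro r; simp [hH, polarMap]
  have hzero : ∫ z in Icc ((0 : ℝ), -Real.pi) (R, Real.pi), z.1 * W (polarMap z) = 0 := by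
    rw [← setIntegral_congr_fun measurableSet_Icc (fun z hz => hdiv z (hsub hz)), hthm]
    simp [hGR, hper]
    simp [hG]
  have hae := (setIntegral_eq_zero_iff_of_nonneg_ae
    ((ae_restrict_iff' measurableSet_Icc).2 (Eventually.of_forall fun z (hz : z ∈ Icc ((0 : ℝ), -Real.pi) (R, Real.pi)) =>
      mul_nonneg hz.1.1 (hnn' _ (hball z hz)))) hint).1 hzero
  have hEq : EqOn (fun z : ℝ × ℝ => z.1 * W (polarMap z)) 0
      (Icc ((0 : ℝ), -Real.pi) (R, Real.pi)) := by
    refine Measure.eqOn_of_ae_eq hae (hrW.mono hsub) continuousOn_const ?_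
    rw [Icc_prod_eq, interior_prod_eq, closure_prod_eq, closure_interior_Icc hR.ne,
      closure_interior_Icc (by simp; linarith [Real.pi_pos])]
  have hne : ∀ x ∈ Metric.ball (0 : EuclideanSpace ℝ (Fin 2)) R, x ≠ 0 → W x = 0 := by
    intro x hx hx0
    obtain ⟨t, ht, hpx⟩ := exists_polarMap x
    have h := hEq (x := (‖x‖, t)) ⟨⟨norm_nonneg x, ht.1⟩, ⟨(mem_ball_zero_iff.1 hx).le, ht.2⟩⟩
    simp only [hpx] at h
    exact (mul_eq_zero.1 h).resolve_left (norm_ne_zero_iff.2 hx0)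
  intro x hx
  by_cases hx0 : x = 0
  · -- polar coordinates give no information at the origin, which is recovered by continuity
    subst hx0
    have hc : Tendsto W (𝓝[≠] 0) (𝓝 (W 0)) :=
      ((hWc.continuousAt (hU.mem_nhds (hDU (Metric.ball_subset_closedBall hx)))).tendsto).mono_left
        nhdsWithin_le_nhds
    have he : ∀ᶠ y in 𝓝[≠] (0 : EuclideanSpace ℝ (Fin 2)), W y = 0 := by
      filter_upwards [self_mem_nhdsWithin,
        mem_nhdsWithin_of_mem_nhds (Metric.isOpen_ball.mem_nhds hx)] with y hy hy'
      exact hne y hy' hy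
    exact tendsto_nhds_unique hc (tendsto_const_nhds.congr' (he.mono fun y hy => hy.symm))
  · exact hne x hx hx0

/-- A function with vanishing partial derivatives on a disk is constant there. -/
lemma exists_const_of_pd_eq_zero {R : ℝ} {U : Set (EuclideanSpace ℝ (Fin 2))}
    (hDU : Metric.closedBall (0 : EuclideanSpace ℝ (Fin 2)) R ⊆ U)
    {f : EuclideanSpace ℝ (Fin 2) → ℝ} (hf : ContDiffOn ℝ 1 f U)
    (h : ∀ x ∈ Metric.ball (0 : EuclideanSpace ℝ (Fin 2)) R, pd f 0 x = 0 ∧ pd f 1 x = 0) :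
    ∃ c, ∀ x ∈ Metric.ball (0 : EuclideanSpace ℝ (Fin 2)) R, f x = c := by
  have hb := Metric.ball_subset_closedBall.trans hDU
  refine Metric.isOpen_ball.exists_is_const_of_fderiv_eq_zero
    (convex_ball (0 : EuclideanSpace ℝ (Fin 2)) R).isPreconnected
    ((hf.differentiableOn (by norm_num)).mono hb) fun x hx => ?_
  ext v
  simp [fderiv_apply_eq_pd, (h x hx).1, (h x hx).2]

/-! ### Rigidity -/

/-- A `C²` solution of the homogeneous Neumann problem for the Lamé system on the disk
(`L^{λ,μ}u = 0` in `D` and `∂_ν u = 0` on `∂D`) is a rigid motion: there are constants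
`a, b, c` with `u(x) = (a + c x₂, b − c x₁)` on the closed disk. In particular, the
solution space is spanned by `(1,0)`, `(0,1)` and `(x₂, −x₁)`. -/
theorem lame_neumann_rigid_motion (R lam mu : ℝ) (hR : 0 < R)
    (hmu : 0 < mu) (hlm : 0 < lam + mu)
    (u : EuclideanSpace ℝ (Fin 2) → EuclideanSpace ℝ (Fin 2))
    (U : Set (EuclideanSpace ℝ (Fin 2))) (hU : IsOpen U)
    (hDU : Metric.closedBall (0 : EuclideanSpace ℝ (Fin 2)) R ⊆ U)
    (hu : ContDiffOn ℝ 2 u U)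
    (hL : ∀ x ∈ Metric.ball (0 : EuclideanSpace ℝ (Fin 2)) R, lameOp lam mu u x = 0)
    (hT : ∀ x ∈ Metric.sphere (0 : EuclideanSpace ℝ (Fin 2)) R,
      traction lam mu R u x = 0) :
    ∃ a b c : ℝ, ∀ x ∈ Metric.closedBall (0 : EuclideanSpace ℝ (Fin 2)) R,
      u x 0 = a + c * x 1 ∧ u x 1 = b - c * x 0 := by
  set f : EuclideanSpace ℝ (Fin 2) → ℝ := fun z => u z 0 with hfdef
  set g : EuclideanSpace ℝ (Fin 2) → ℝ := fun z => u z 1 with hgdef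
  have hf : ContDiffOn ℝ 2 f U := contDiffOn_euclidean.1 hu 0
  have hg : ContDiffOn ℝ 2 g U := contDiffOn_euclidean.1 hu 1
  have hf1 : ContDiffOn ℝ 1 f U := hf.of_le (by norm_num)
  have hg1 : ContDiffOn ℝ 1 g U := hg.of_le (by norm_num)
  have hpf : ∀ j, ContDiffOn ℝ 1 (pd f j) U := contDiffOn_pd hU hf (by norm_num)
  have hpg : ∀ j, ContDiffOn ℝ 1 (pd g j) U := contDiffOn_pd hU hg (by norm_num)
  have hdiff : ∀ {h : EuclideanSpace ℝ (Fin 2) → ℝ}, ContDiffOn ℝ 1 h U → ∀ x ∈ U,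
      DifferentiableAt ℝ h x := fun hh x hx =>
    (hh.contDiffAt (hU.mem_nhds hx)).differentiableAt (by norm_num)
  have hBU : Metric.ball (0 : EuclideanSpace ℝ (Fin 2)) R ⊆ U :=
    Metric.ball_subset_closedBall.trans hDU
  -- the entries `σ₁₁`, `σ₁₂ = σ₂₁`, `σ₂₂` of the stress tensor
  set s : EuclideanSpace ℝ (Fin 2) → ℝ :=
    fun y => (lam + 2 * mu) * pd f 0 y + lam * pd g 1 y with hs
  set t : EuclideanSpace ℝ (Fin 2) → ℝ := fun y => mu * pd f 1 y + mu * pd g 0 y with ht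
  set w : EuclideanSpace ℝ (Fin 2) → ℝ :=
    fun y => lam * pd f 0 y + (lam + 2 * mu) * pd g 1 y with hw
  have hsd : ContDiffOn ℝ 1 s U :=
    (contDiffOn_const.mul (hpf 0)).add (contDiffOn_const.mul (hpg 1))
  have htd : ContDiffOn ℝ 1 t U :=
    (contDiffOn_const.mul (hpf 1)).add (contDiffOn_const.mul (hpg 0))
  have hwd : ContDiffOn ℝ 1 w U :=
    (contDiffOn_const.mul (hpf 0)).add (contDiffOn_const.mul (hpg 1))
  -- `div (σ u)` is the elastic energy density, by symmetry of second derivatives and `L u = 0`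
  have hdiv : ∀ x ∈ Metric.ball (0 : EuclideanSpace ℝ (Fin 2)) R,
      pd (fun y => s y * f y + t y * g y) 0 x + pd (fun y => t y * f y + w y * g y) 1 x
        = (lam + mu) * (pd f 0 x + pd g 1 x) ^ 2
          + mu * ((pd f 0 x - pd g 1 x) ^ 2 + (pd f 1 x + pd g 0 x) ^ 2) := by
    intro x hx
    have hxU := hBU hx
    have df0 := hdiff (hpf 0) x hxU
    have df1 := hdiff (hpf 1) x hxU
    have dg0 := hdiff (hpg 0) x hxU
    have dg1 := hdiff (hpg 1) x hxU
    have hdv : ∀ i, pd (fun y => divg u y) i x = pd (pd f 0) i x + pd (pd g 1) i x := by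
      intro i
      have h := pd_lincomb 1 1 i df0 dg1
      simp only [one_mul] at h
      exact h
    have e0 : mu * (pd (pd f 0) 0 x + pd (pd f 1) 1 x)
        + (lam + mu) * (pd (pd f 0) 0 x + pd (pd g 1) 0 x) = 0 := by
      have h := congrFun (hL x hx) 0
      simp only [lameOp, Fin.sum_univ_two, hdv] at h
      exact h
    have e1 : mu * (pd (pd g 0) 0 x + pd (pd g 1) 1 x)
        + (lam + mu) * (pd (pd f 0) 1 x + pd (pd g 1) 1 x) = 0 := by
      have h := congrFun (hL x hx) 1
      simp only [lameOp, Fin.sum_univ_two, hdv] at h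
      exact h
    have cf := pd_comm hU hf hxU 0 1
    have cg := pd_comm hU hg hxU 0 1
    rw [pd_dot 0 (hdiff hsd x hxU) (hdiff hf1 x hxU) (hdiff htd x hxU) (hdiff hg1 x hxU),
      pd_dot 1 (hdiff htd x hxU) (hdiff hf1 x hxU) (hdiff hwd x hxU) (hdiff hg1 x hxU),
      hs, ht, hw, pd_lincomb _ _ 0 df0 dg1, pd_lincomb _ _ 0 df1 dg0, pd_lincomb _ _ 1 df1 dg0,
      pd_lincomb _ _ 1 df0 dg1]
    linear_combination f x * e0 + g x * e1 + mu * f x * cg - mu * g x * cf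
  have hW := div_eq_zero_of_nonneg hR hU hDU ((hsd.mul hf1).add (htd.mul hg1))
    ((htd.mul hf1).add (hwd.mul hg1))
    (fun x hx => by
      have h := hdiv x hx
      refine le_of_le_of_eq ?_ h.symm
      positivity)
    (fun x hx => by
      have h0 := congrFun (hT x hx) 0
      have h1 := congrFun (hT x hx) 1
      simp only [traction, divg, gradMat, Matrix.mulVec, dotProduct, Fin.sum_univ_two,
        Matrix.add_apply, Matrix.transpose_apply, Pi.zero_apply] at h0 h1
      change lam * (pd f 0 x + pd g 1 x) * (x 0 / R) + mu * ((pd f 0 x + pd f 0 x) * (x 0 / R)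
        + (pd f 1 x + pd g 0 x) * (x 1 / R)) = 0 at h0
      change lam * (pd f 0 x + pd g 1 x) * (x 1 / R) + mu * ((pd g 0 x + pd f 1 x) * (x 0 / R)
        + (pd g 1 x + pd g 1 x) * (x 1 / R)) = 0 at h1
      field_simp at h0 h1
      change (s x * f x + t x * g x) * x 0 + (t x * f x + w x * g x) * x 1 = 0
      simp only [hs, ht, hw]
      linear_combination f x * h0 + g x * h1)
  -- a vanishing energy density means a vanishing strain tensor
  have hstrain : ∀ x ∈ Metric.ball (0 : EuclideanSpace ℝ (Fin 2)) R,
      pd f 0 x = 0 ∧ pd g 1 x = 0 ∧ pd f 1 x + pd g 0 x = 0 := by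
    intro x hx
    have h := (hdiv x hx).symm.trans (hW x hx)
    have n1 : 0 ≤ (lam + mu) * (pd f 0 x + pd g 1 x) ^ 2 := by positivity
    have n2 : 0 ≤ mu * (pd f 0 x - pd g 1 x) ^ 2 := by positivity
    have n3 : 0 ≤ mu * (pd f 1 x + pd g 0 x) ^ 2 := by positivity
    have z1 : (lam + mu) * (pd f 0 x + pd g 1 x) ^ 2 = 0 := by linarith
    have z2 : mu * (pd f 0 x - pd g 1 x) ^ 2 = 0 := by linarith
    have z3 : mu * (pd f 1 x + pd g 0 x) ^ 2 = 0 := by linarith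
    have y1 := pow_eq_zero_iff (two_ne_zero) |>.1 ((mul_eq_zero.1 z1).resolve_left hlm.ne')
    have y2 := pow_eq_zero_iff (two_ne_zero) |>.1 ((mul_eq_zero.1 z2).resolve_left hmu.ne')
    have y3 := pow_eq_zero_iff (two_ne_zero) |>.1 ((mul_eq_zero.1 z3).resolve_left hmu.ne')
    exact ⟨by linarith, by linarith, y3⟩
  -- partial derivatives at points of the open disk only depend on the values there
  have hcongr : ∀ {p q : EuclideanSpace ℝ (Fin 2) → ℝ},
      (∀ x ∈ Metric.ball (0 : EuclideanSpace ℝ (Fin 2)) R, p x = q x) →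
      ∀ x ∈ Metric.ball (0 : EuclideanSpace ℝ (Fin 2)) R, ∀ j, pd p j x = pd q j x := by
    intro p q hpq x hx j
    have he : p =ᶠ[𝓝 x] q :=
      Filter.eventually_of_mem (Metric.isOpen_ball.mem_nhds hx) hpq
    simp only [pd, he.fderiv_eq]
  have hzero : ∀ (x : EuclideanSpace ℝ (Fin 2)) (j : Fin 2), pd (fun _ => (0 : ℝ)) j x = 0 := by
    intro x j; simp [pd]
  obtain ⟨c, hc⟩ := exists_const_of_pd_eq_zero hDU (hpf 1) (fun x hx => by
    constructor
    · rw [pd_comm hU hf (hBU hx), hcongr (fun y hy => (hstrain y hy).1) x hx, hzero]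
    · have h1 : pd (pd f 1) 1 x = pd (fun y => 0 * pd f 1 y + (-1) * pd g 0 y) 1 x :=
        hcongr (fun y hy => by linarith [(hstrain y hy).2.2]) x hx 1
      rw [h1, pd_lincomb _ _ _ (hdiff (hpf 1) x (hBU hx)) (hdiff (hpg 0) x (hBU hx)),
        pd_comm hU hg (hBU hx), hcongr (fun y hy => (hstrain y hy).2.1) x hx, hzero]
      ring)
  have hcoord : ∀ i : Fin 2, ContDiff ℝ 1 (fun y : EuclideanSpace ℝ (Fin 2) => y i) := by
    intro i; fun_prop
  have hpc : ∀ (i j : Fin 2) (x : EuclideanSpace ℝ (Fin 2)),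
      pd (fun y : EuclideanSpace ℝ (Fin 2) => y i) j x = if i = j then 1 else 0 := by
    intro i j x
    have h : fderiv ℝ (fun y : EuclideanSpace ℝ (Fin 2) => y i) x
        = EuclideanSpace.proj (𝕜 := ℝ) i :=
      (EuclideanSpace.proj (𝕜 := ℝ) i : EuclideanSpace ℝ (Fin 2) →L[ℝ] ℝ).hasFDerivAt.fderiv
    rw [pd, h]
    simp
  obtain ⟨a, ha⟩ := exists_const_of_pd_eq_zero hDU
    (f := fun y => 1 * f y + (-c) * y 1)
    ((contDiffOn_const.mul hf1).add (contDiffOn_const.mul (hcoord 1).contDiffOn)) (fun x hx => by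
      have hd1 := hdiff (hcoord 1).contDiffOn x (hBU hx)
      have hdf := hdiff hf1 x (hBU hx)
      rw [pd_lincomb _ _ _ hdf hd1, pd_lincomb _ _ _ hdf hd1, hpc, hpc, (hstrain x hx).1,
        hc x hx]
      simp)
  obtain ⟨b, hb⟩ := exists_const_of_pd_eq_zero hDU
    (f := fun y => 1 * g y + c * y 0)
    ((contDiffOn_const.mul hg1).add (contDiffOn_const.mul (hcoord 0).contDiffOn)) (fun x hx => by
      have hd0 := hdiff (hcoord 0).contDiffOn x (hBU hx)
      have hdg := hdiff hg1 x (hBU hx)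
      rw [pd_lincomb _ _ _ hdg hd0, pd_lincomb _ _ _ hdg hd0, hpc, hpc, (hstrain x hx).2.1]
      have h1 := (hstrain x hx).2.2
      rw [hc x hx] at h1
      simp
      linarith)
  -- the formulas extend from the open disk to its closure by continuity
  have hext : ∀ {p q : EuclideanSpace ℝ (Fin 2) → ℝ}, ContinuousOn p U → Continuous q →
      (∀ x ∈ Metric.ball (0 : EuclideanSpace ℝ (Fin 2)) R, p x = q x) →
      ∀ x ∈ Metric.closedBall (0 : EuclideanSpace ℝ (Fin 2)) R, p x = q x := by
    intro p q hp hq hpq x hx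
    have hcl := closure_ball (0 : EuclideanSpace ℝ (Fin 2)) hR.ne'
    exact Set.EqOn.of_subset_closure (s := Metric.ball 0 R) hpq (hp.mono hDU) hq.continuousOn
      Metric.ball_subset_closedBall hcl.ge hx
  refine ⟨a, b, c, fun x hx => ⟨?_, ?_⟩⟩
  · exact hext (p := f) (q := fun y => a + c * y 1) hf.continuousOn (by fun_prop)
      (fun y hy => by linarith [ha y hy]) x hx
  · exact hext (p := g) (q := fun y => b - c * y 0) hg.continuousOn (by fun_prop)
      (fun y hy => by linarith [hb y hy]) x hx
end

section
/- Assume τ₁ ln R ≠ τ₂/2 and set c₀ = τ₁ R ln R − (τ₂/2) R. Then for all k₁, k₂ > 0 one has c₀ + 2πR β_{k₂} ≠ 0, and, writing a = (c₀ + 2πR β_{k₁})/(c₀ + 2πR β_{k₂}) ∈ ℂ, for every x ∈ D the identity ∫_{∂D} G⁰(x − y) e₁ dσ(y) + 2πR β_{k₁} e₁ = a ( ∫_{∂D} G⁰(x − y) e₁ dσ(y) + 2πR β_{k₂} e₁ ) holds in ℂ², where e₁ = (1,0). (This identifies the coefficient a aligning the leading-order single-layer operators Ŝ^{k₁}_D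 and Ŝ^{k₂}_D on constant densities, as used in the computation of the kernel of A₀.) -/
/-!
Inside the disk the single-layer potential of the constant density `e₁` is the constant vector
`c₀ e₁`, where `c₀ = τ₁ R ln R - (τ₂/2) R` (`SLc_e1`). Both brackets in the claimed identity are
therefore scalar multiples of `e₁`, with factors `c₀ + 2πR β_{k₁}` and `c₀ + 2πR β_{k₂}`, and `a`
is their quotient. The second factor is nonzero because its imaginary part is `-πR τ₁ / 2 < 0`.

To compute the potential, the Hausdorff measure `μH[1]` on the circle is identified with `R dθ`
(`hausdorffMeasure_restrict_sphere`). The parametrization `θ ↦ R e^{iθ}` is `R`-Lipschitz, which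
bounds arclength from above; on arcs of angle at most `δ` its inverse is `(1 + δ)/R`-Lipschitz,
which after summation over such arcs and `δ → 0` bounds it from below.

The remaining integrals are mean values. The mean of `ln |x - y|` over the circle is `ln R` for `x`
in the disk. With `z = x - y` regarded as a complex number, the quadratic part of the kernel is
`z₁² / |z|² = (1 + Re (z / conj z)) / 2` and `z₁ z₂ / |z|² = Im (z / conj z) / 2`, and
`z / conj z` has mean zero over the circle: as a function of `y` it agrees there with a
holomorphic function on the closed disk vanishing at the origin (`integral_div_conj`).
-/

open MeasureTheory

/-- The constant
`β_k = (τ₁/(4π))(2γ − πi − ln 4) + τ₂/(4π) + ln(k/√(λ+2μ))/(4π(λ+2μ)) + ln(k/√μ)/(4πμ)`,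
with `γ` the Euler–Mascheroni constant. -/
noncomputable def betaK (lam mu k : ℝ) : ℂ :=
  (tau1 lam mu / (4 * Real.pi) : ℝ) *
      (2 * (Real.eulerMascheroniConstant : ℂ) - Real.pi * Complex.I - (Real.log 4 : ℝ))
    + (tau2 lam mu / (4 * Real.pi) : ℝ)
    + (Real.log (k / Real.sqrt (lam + 2 * mu)) / (4 * Real.pi * (lam + 2 * mu)) : ℝ)
    + (Real.log (k / Real.sqrt mu) / (4 * Real.pi * mu) : ℝ)

/-- The single-layer potential of the Kelvin matrix on the circle of radius `R` applied
to a constant density `v`, complexified componentwise. -/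
noncomputable def SLc (lam mu R : ℝ) (x : EuclideanSpace ℝ (Fin 2)) (v : Fin 2 → ℝ) :
    Fin 2 → ℂ := fun i =>
  ((∫ y in Metric.sphere (0 : EuclideanSpace ℝ (Fin 2)) R,
      (KelvinG0 lam mu (x - y)).mulVec v ∂μH[1]) i : ℂ)

/-! ### Arclength on the circle as a Hausdorff measure -/

/-- The point of angle `θ` on the circle of radius `R` about the origin, in
`EuclideanSpace ℝ (Fin 2)`; this is Mathlib's `circleMap 0 R` transported along the
standard isometry with `ℂ`. -/
noncomputable def circlePt (R θ : ℝ) : EuclideanSpace ℝ (Fin 2) :=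
  Complex.orthonormalBasisOneI.repr (circleMap 0 R θ)

lemma continuous_circlePt (R : ℝ) : Continuous (circlePt R) :=
  Complex.orthonormalBasisOneI.repr.continuous.comp (continuous_circleMap 0 R)

lemma norm_circlePt {R : ℝ} (hR : 0 < R) (θ : ℝ) : ‖circlePt R θ‖ = R := by
  simp [circlePt, abs_of_pos hR]

lemma image_circlePt {R : ℝ} (hR : 0 < R) :
    circlePt R '' Set.Ioc 0 (2 * Real.pi) = Metric.sphere 0 R := by
  have h : circlePt R = Complex.orthonormalBasisOneI.repr ∘ circleMap 0 R := rfl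
  rw [h, Set.image_comp, image_circleMap_Ioc, LinearIsometryEquiv.image_sphere, map_zero,
    abs_of_pos hR]

lemma injOn_circlePt {R : ℝ} (hR : 0 < R) :
    Set.InjOn (circlePt R) (Set.Ioc 0 (2 * Real.pi)) := by
  have h := injOn_circleMap_of_abs_sub_le (a := 0) (b := 2 * Real.pi) (c := 0) hR.ne'
    (by rw [zero_sub, abs_neg, abs_of_pos Real.two_pi_pos])
  rw [Set.uIoc_of_le Real.two_pi_pos.le] at h
  exact fun a ha b hb hab => h ha hb (Complex.orthonormalBasisOneI.repr.injective hab)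

lemma lipschitzWith_circlePt {R : ℝ} (hR : 0 < R) :
    LipschitzWith (Real.toNNReal R) (circlePt R) := by
  have h := Complex.orthonormalBasisOneI.repr.lipschitz.comp (lipschitzWith_circleMap 0 R)
  rwa [one_mul, Real.nnabs_of_nonneg hR.le] at h

lemma dist_circlePt {R : ℝ} (hR : 0 < R) (a b : ℝ) :
    dist (circlePt R a) (circlePt R b) = R * (2 * |Real.sin ((a - b) / 2)|) := by
  have h1 : circleMap 0 R a - circleMap 0 R b
      = R * (Complex.exp (b * Complex.I) * (Complex.exp (Complex.I * ((a - b : ℝ) : ℂ)) - 1)) := by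
    rw [circleMap_zero, circleMap_zero, mul_sub, ← Complex.exp_add]
    push_cast
    ring_nf
  rw [circlePt, circlePt, LinearIsometryEquiv.dist_map, dist_eq_norm, h1, norm_mul, norm_mul,
    Complex.norm_exp_ofReal_mul_I, Complex.norm_exp_I_mul_ofReal_sub_one]
  simp [abs_of_pos hR]

/-- On arcs of angle at most `δ` the ratio of angle to chord is at most `(1 + δ) / R`. -/
lemma dist_le_dist_circlePt {R δ : ℝ} (hR : 0 < R) (hδ : δ ≤ 1) {a b : ℝ}
    (hab : |a - b| ≤ δ) :
    dist a b ≤ (1 + δ) / R * dist (circlePt R a) (circlePt R b) := by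
  rw [dist_circlePt hR, Real.dist_eq]
  have hδ0 : 0 ≤ δ := (abs_nonneg _).trans hab
  have h1 : |Real.sin ((a - b) / 2)| = Real.sin (|a - b| / 2) := by
    rcases abs_cases (a - b) with ⟨h, h'⟩ | ⟨h, h'⟩
    · rw [h, abs_of_nonneg]
      exact Real.sin_nonneg_of_nonneg_of_le_pi (by linarith) (by linarith [Real.pi_gt_three])
    · rw [h, neg_div, Real.sin_neg, abs_of_nonpos]
      exact Real.sin_nonpos_of_nonpos_of_neg_pi_le (by linarith) (by linarith [Real.pi_gt_three])
  rw [h1]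
  have h2 : (1 + δ) / R * (R * (2 * Real.sin (|a - b| / 2)))
      = (1 + δ) * (2 * Real.sin (|a - b| / 2)) := by
    field_simp
  rw [h2]
  set t := |a - b|
  rcases (abs_nonneg (a - b)).eq_or_lt with h0 | h0
  · have : t = 0 := h0.symm
    simp [this]
  · have h3 := Real.sin_gt_sub_cube (x := t / 2) (half_pos h0)
    have h4 : t * (1 - δ ^ 2 / 24) ≤ 2 * Real.sin (t / 2) := by
      have : t ^ 2 ≤ δ ^ 2 := by gcongr
      nlinarith
    have h5 : 1 ≤ (1 + δ) * (1 - δ ^ 2 / 24) := by nlinarith [mul_nonneg hδ0 hδ0]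
    calc t ≤ t * ((1 + δ) * (1 - δ ^ 2 / 24)) := le_mul_of_one_le_right h0.le h5
      _ = (1 + δ) * (t * (1 - δ ^ 2 / 24)) := by ring
      _ ≤ _ := by gcongr

/-- The lower bound for arclength: `A` is cut into the pieces lying in the intervals
`(nδ, (n+1)δ]`, on each of which the inverse of `circlePt R` is `(1 + δ) / R`-Lipschitz. -/
lemma volume_le_mul_hausdorffMeasure {R δ : ℝ} (hR : 0 < R) (hδ0 : 0 < δ) (hδ : δ ≤ 1)
    {A : Set ℝ} (hA : MeasurableSet A) (hA' : A ⊆ Set.Ioc 0 (2 * Real.pi)) :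
    volume A ≤ ENNReal.ofReal ((1 + δ) / R) * μH[1] (circlePt R '' A) := by
  let I : ℤ → Set ℝ := fun n => Set.Ioc (n • δ) ((n + 1) • δ)
  have hIdisj : Pairwise (Function.onFun Disjoint I) := Set.pairwise_disjoint_Ioc_zsmul δ
  have hIU : ⋃ n, I n = Set.univ := iUnion_Ioc_zsmul hδ0
  let B : ℤ → Set ℝ := fun n => A ∩ I n
  have hB : ∀ n, MeasurableSet (B n) := fun n => hA.inter measurableSet_Ioc
  have hAB : A = ⋃ n, B n := by rw [← Set.inter_iUnion, hIU, Set.inter_univ]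
  have hBdisj : Pairwise (Function.onFun Disjoint B) := fun m n h =>
    (hIdisj h).mono Set.inter_subset_right Set.inter_subset_right
  have hBA : ∀ n, B n ⊆ Set.Ioc 0 (2 * Real.pi) := fun n => Set.inter_subset_left.trans hA'
  have hpiece : ∀ n, volume (B n)
      ≤ ENNReal.ofReal ((1 + δ) / R) * μH[1] (circlePt R '' B n) := by
    intro n
    have hinj := (injOn_circlePt hR).mono (hBA n)
    have hlip : LipschitzOnWith (Real.toNNReal ((1 + δ) / R))
        (Function.invFunOn (circlePt R) (B n)) (circlePt R '' B n) := by
      apply LipschitzOnWith.of_dist_le_mul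
      rintro _ ⟨a, ha, rfl⟩ _ ⟨b, hb, rfl⟩
      rw [hinj.leftInvOn_invFunOn ha, hinj.leftInvOn_invFunOn hb,
        Real.coe_toNNReal _ (by positivity)]
      apply dist_le_dist_circlePt hR hδ
      have h1 := ha.2
      have h2 := hb.2
      simp only [I, Set.mem_Ioc, add_smul, one_smul] at h1 h2
      rw [abs_le]
      constructor <;> linarith
    have h := hlip.hausdorffMeasure_image_le (d := 1) zero_le_one
    rw [hinj.leftInvOn_invFunOn.image_image, hausdorffMeasure_real, ENNReal.rpow_one] at h
    exact h
  calc volume A = ∑' n, volume (B n) := by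
        conv_lhs => rw [hAB]
        exact measure_iUnion hBdisj hB
    _ ≤ ∑' n, ENNReal.ofReal ((1 + δ) / R) * μH[1] (circlePt R '' B n) :=
        ENNReal.tsum_le_tsum hpiece
    _ = ENNReal.ofReal ((1 + δ) / R) * μH[1] (⋃ n, circlePt R '' B n) := by
        rw [ENNReal.tsum_mul_left, measure_iUnion]
        · intro m n h
          exact (hBdisj h).image (injOn_circlePt hR) (hBA m) (hBA n)
        · intro n
          exact (hB n).image_of_continuousOn_injOn (continuous_circlePt R).continuousOn
            ((injOn_circlePt hR).mono (hBA n))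
    _ = _ := by rw [← Set.image_iUnion, ← hAB]

/-- The one-dimensional Hausdorff measure of a subset of the circle is `R` times the Lebesgue
measure of its set of angles. -/
lemma hausdorffMeasure_image_circlePt {R : ℝ} (hR : 0 < R) {A : Set ℝ} (hA : MeasurableSet A)
    (hA' : A ⊆ Set.Ioc 0 (2 * Real.pi)) :
    μH[1] (circlePt R '' A) = ENNReal.ofReal R * volume A := by
  apply le_antisymm
  · have h := (lipschitzWith_circlePt hR).hausdorffMeasure_image_le (d := 1) zero_le_one A
    rw [hausdorffMeasure_real, ENNReal.rpow_one] at h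
    exact h
  · have h1 : volume A ≤ ENNReal.ofReal ((1 + 0) / R) * μH[1] (circlePt R '' A) := by
      have hlim : Filter.Tendsto
          (fun δ : ℝ => ENNReal.ofReal ((1 + δ) / R) * μH[1] (circlePt R '' A))
          (nhdsWithin 0 (Set.Ioi 0))
          (nhds (ENNReal.ofReal ((1 + 0) / R) * μH[1] (circlePt R '' A))) := by
        apply ENNReal.Tendsto.mul_const
        · apply ENNReal.tendsto_ofReal
          have : Continuous fun δ : ℝ => (1 + δ) / R := by fun_prop
          exact this.continuousAt.tendsto.mono_left nhdsWithin_le_nhds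
        · left
          simp [hR]
      refine ge_of_tendsto hlim ?_
      filter_upwards [Ioc_mem_nhdsGT (zero_lt_one (α := ℝ))] with δ hδ
      exact volume_le_mul_hausdorffMeasure hR hδ.1 hδ.2 hA hA'
    calc ENNReal.ofReal R * volume A
        ≤ ENNReal.ofReal R * (ENNReal.ofReal ((1 + 0) / R) * μH[1] (circlePt R '' A)) := by
          gcongr
      _ = _ := by
          rw [← mul_assoc, ← ENNReal.ofReal_mul hR.le, add_zero, mul_one_div_cancel hR.ne',
            ENNReal.ofReal_one, one_mul]

/-- Arclength on the circle is `R dθ`. -/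
lemma hausdorffMeasure_restrict_sphere {R : ℝ} (hR : 0 < R) :
    (μH[1] : Measure (EuclideanSpace ℝ (Fin 2))).restrict (Metric.sphere 0 R)
      = ENNReal.ofReal R •
        (volume.restrict (Set.Ioc 0 (2 * Real.pi))).map (circlePt R) := by
  ext S hS
  have hm := (continuous_circlePt R).measurable
  rw [Measure.restrict_apply hS, Measure.smul_apply, Measure.map_apply hm hS,
    Measure.restrict_apply (hm hS), smul_eq_mul,
    ← hausdorffMeasure_image_circlePt hR ((hm hS).inter measurableSet_Ioc) Set.inter_subset_right,
    Set.image_preimage_inter, image_circlePt hR]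

/-- Integration over the circle in polar angle. -/
lemma setIntegral_sphere {R : ℝ} (hR : 0 < R) {F : EuclideanSpace ℝ (Fin 2) → ℝ}
    (hF : Measurable F) :
    ∫ y in Metric.sphere (0 : EuclideanSpace ℝ (Fin 2)) R, F y ∂μH[1]
      = R * ∫ θ in 0..2 * Real.pi, F (circlePt R θ) := by
  rw [hausdorffMeasure_restrict_sphere hR, integral_smul_measure,
    integral_map (continuous_circlePt R).aemeasurable hF.aestronglyMeasurable,
    intervalIntegral.integral_of_le Real.two_pi_pos.le, ENNReal.toReal_ofReal hR.le, smul_eq_mul]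

lemma integrableOn_sphere {R : ℝ} (hR : 0 < R) {F : EuclideanSpace ℝ (Fin 2) → ℝ}
    (hF : Measurable F) (hc : Continuous fun θ => F (circlePt R θ)) :
    IntegrableOn F (Metric.sphere (0 : EuclideanSpace ℝ (Fin 2)) R) μH[1] := by
  rw [IntegrableOn, hausdorffMeasure_restrict_sphere hR]
  refine Integrable.smul_measure ?_ ENNReal.ofReal_ne_top
  rw [integrable_map_measure hF.aestronglyMeasurable (continuous_circlePt R).aemeasurable]
  exact hc.integrableOn_Ioc

/-! ### Mean values of the entries of the Kelvin matrix -/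

/-- The complex number with the coordinates of a point of the plane. -/
noncomputable def toC (x : EuclideanSpace ℝ (Fin 2)) : ℂ :=
  Complex.orthonormalBasisOneI.repr.symm x

lemma norm_toC (x : EuclideanSpace ℝ (Fin 2)) : ‖toC x‖ = ‖x‖ :=
  LinearIsometryEquiv.norm_map _ _

lemma toC_re (x : EuclideanSpace ℝ (Fin 2)) : (toC x).re = x 0 := by
  simp [toC]

lemma toC_im (x : EuclideanSpace ℝ (Fin 2)) : (toC x).im = x 1 := by
  simp [toC]

lemma toC_sub_circlePt (x : EuclideanSpace ℝ (Fin 2)) (R θ : ℝ) :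
    toC (x - circlePt R θ) = toC x - circleMap 0 R θ := by
  rw [toC, map_sub, circlePt, LinearIsometryEquiv.symm_apply_apply, toC]

lemma sub_circlePt_ne_zero {R : ℝ} (hR : 0 < R) {x : EuclideanSpace ℝ (Fin 2)} (hx : ‖x‖ < R)
    (θ : ℝ) : x - circlePt R θ ≠ 0 := by
  intro h
  rw [sub_eq_zero.1 h, norm_circlePt hR] at hx
  exact hx.false

lemma integral_log_circlePt {R : ℝ} (hR : 0 < R) {x : EuclideanSpace ℝ (Fin 2)} (hx : ‖x‖ < R) :
    ∫ θ in 0..2 * Real.pi, Real.log ‖x - circlePt R θ‖ = 2 * Real.pi * Real.log R := by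
  have h := circleAverage_log_norm_sub_const_of_mem_closedBall (a := toC x) (c := 0) (R := R)
    (by simpa [norm_toC, abs_of_pos hR] using hx.le)
  rw [Real.circleAverage_def, smul_eq_mul, inv_mul_eq_iff_eq_mul₀ Real.two_pi_pos.ne'] at h
  rw [← h]
  congr 1
  ext θ
  rw [← norm_toC, toC_sub_circlePt, norm_sub_rev]

/-- On `|y| = R` one has `conj y = R² / y`, so `(w - y) / conj (w - y)` is the restriction to the
circle of the function `y (w - y) / (conj w * y - R²)`, holomorphic on the closed disk and
vanishing at the centre. -/
lemma integral_div_conj {R : ℝ} (hR : 0 < R) {w : ℂ} (hw : ‖w‖ < R) :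
    ∫ θ in 0..2 * Real.pi, (w - circleMap 0 R θ) / (starRingEnd ℂ) (w - circleMap 0 R θ) = 0 := by
  let f : ℂ → ℂ := fun y => y * (w - y) / ((starRingEnd ℂ) w * y - (R : ℂ) ^ 2)
  have hden : ∀ y ∈ Metric.closedBall (0 : ℂ) R, (starRingEnd ℂ) w * y - (R : ℂ) ^ 2 ≠ 0 := by
    intro y hy h
    have hy' : ‖y‖ ≤ R := by simpa using hy
    have h1 : ‖(starRingEnd ℂ) w * y‖ = R ^ 2 := by
      rw [sub_eq_zero.1 h]
      simp
    rw [norm_mul, RCLike.norm_conj] at h1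
    nlinarith [norm_nonneg w, norm_nonneg y]
  have hf : DifferentiableOn ℂ f (Metric.closedBall 0 R) := by
    intro y hy
    exact DifferentiableAt.differentiableWithinAt
      (DifferentiableAt.div (by fun_prop) (by fun_prop) (hden y hy))
  have h := DiffContOnCl.circleAverage (f := f) (c := 0) (R := R) (by
    rw [abs_of_pos hR]
    exact DifferentiableOn.diffContOnCl_ball (U := Metric.closedBall 0 R) hf subset_rfl)
  rw [Real.circleAverage_def, show f 0 = 0 by simp [f],
    smul_eq_zero_iff_right (inv_ne_zero Real.two_pi_pos.ne')] at h
  refine Eq.trans ?_ h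
  congr 1
  ext θ
  set y := circleMap 0 R θ
  have hy : ‖y‖ = R := by simp [y, abs_of_pos hR]
  have hyc : y * (starRingEnd ℂ) y = (R : ℂ) ^ 2 := by
    rw [Complex.mul_conj, Complex.normSq_eq_norm_sq, hy]
    push_cast
    rfl
  have hy0 : y ≠ 0 := norm_ne_zero_iff.1 (by rw [hy]; exact hR.ne')
  have h1 : (starRingEnd ℂ) w * y - (R : ℂ) ^ 2 = y * (starRingEnd ℂ) (w - y) := by
    rw [map_sub, mul_sub, hyc, mul_comm y]
  simp only [f]
  rw [h1, mul_div_mul_left _ _ hy0]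

lemma div_conj_eq (z : EuclideanSpace ℝ (Fin 2)) :
    toC z / (starRingEnd ℂ) (toC z) = (toC z) ^ 2 * ((‖z‖ ^ 2)⁻¹ : ℝ) := by
  have h : ((‖z‖ ^ 2 : ℝ) : ℂ) = toC z * (starRingEnd ℂ) (toC z) := by
    rw [Complex.mul_conj, Complex.normSq_eq_norm_sq, norm_toC]
  rw [Complex.ofReal_inv, h]
  by_cases h0 : toC z = 0
  · simp [h0]
  · have : (starRingEnd ℂ) (toC z) ≠ 0 := by simpa using h0
    field_simp

lemma norm_sq_eq (z : EuclideanSpace ℝ (Fin 2)) : ‖z‖ ^ 2 = z 0 ^ 2 + z 1 ^ 2 := by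
  simp [EuclideanSpace.norm_sq_eq]

lemma kernel_diag_eq {z : EuclideanSpace ℝ (Fin 2)} (hz : z ≠ 0) :
    z 0 * z 0 / ‖z‖ ^ 2 = (1 + (toC z / (starRingEnd ℂ) (toC z)).re) / 2 := by
  have h0 : ‖z‖ ^ 2 ≠ 0 := by simpa using hz
  rw [div_conj_eq, Complex.re_mul_ofReal, sq (toC z), Complex.mul_re, toC_re, toC_im]
  field_simp
  rw [norm_sq_eq]
  ring

lemma kernel_offdiag_eq (z : EuclideanSpace ℝ (Fin 2)) :
    z 1 * z 0 / ‖z‖ ^ 2 = (toC z / (starRingEnd ℂ) (toC z)).im / 2 := by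
  rw [div_conj_eq, Complex.im_mul_ofReal, sq (toC z), Complex.mul_im, toC_re, toC_im]
  ring

lemma continuous_div_conj {R : ℝ} {w : ℂ} (hw : ‖w‖ < R) :
    Continuous fun θ => (w - circleMap 0 R θ) / (starRingEnd ℂ) (w - circleMap 0 R θ) := by
  have hc : Continuous fun θ => w - circleMap 0 R θ :=
    continuous_const.sub (continuous_circleMap 0 R)
  refine hc.div (Complex.continuous_conj.comp hc) fun θ => ?_
  rw [Ne, map_eq_zero, sub_eq_zero]
  exact (circleMap_ne_mem_ball (by simpa using hw) θ).symm

lemma integral_kernel_diag {R : ℝ} (hR : 0 < R) {x : EuclideanSpace ℝ (Fin 2)} (hx : ‖x‖ < R) :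
    ∫ θ in 0..2 * Real.pi, (x - circlePt R θ) 0 * (x - circlePt R θ) 0 / ‖x - circlePt R θ‖ ^ 2
      = Real.pi := by
  have hw : ‖toC x‖ < R := by rwa [norm_toC]
  have hc := continuous_div_conj hw
  have h := Complex.reCLM.intervalIntegral_comp_comm (μ := volume) (hc.intervalIntegrable 0 (2 * Real.pi))
  rw [integral_div_conj hR hw, map_zero] at h
  simp only [Complex.reCLM_apply] at h
  simp_rw [fun θ => kernel_diag_eq (sub_circlePt_ne_zero hR hx θ), toC_sub_circlePt]
  have hre : Continuous fun θ =>
      ((toC x - circleMap 0 R θ) / (starRingEnd ℂ) (toC x - circleMap 0 R θ)).re :=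
    Complex.continuous_re.comp hc
  rw [intervalIntegral.integral_div, intervalIntegral.integral_add (by simp)
    (hre.intervalIntegrable _ _), h]
  simp

lemma integral_kernel_offdiag {R : ℝ} (hR : 0 < R) {x : EuclideanSpace ℝ (Fin 2)}
    (hx : ‖x‖ < R) :
    ∫ θ in 0..2 * Real.pi, (x - circlePt R θ) 1 * (x - circlePt R θ) 0 / ‖x - circlePt R θ‖ ^ 2
      = 0 := by
  have hw : ‖toC x‖ < R := by rwa [norm_toC]
  have hc := continuous_div_conj hw
  have h := Complex.imCLM.intervalIntegral_comp_comm (μ := volume) (hc.intervalIntegrable 0 (2 * Real.pi))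
  rw [integral_div_conj hR hw, map_zero] at h
  simp only [Complex.imCLM_apply] at h
  simp_rw [kernel_offdiag_eq, toC_sub_circlePt]
  rw [intervalIntegral.integral_div, h, zero_div]

/-! ### The single-layer potential of a constant density -/

lemma measurable_KelvinG0 (lam mu : ℝ) (x : EuclideanSpace ℝ (Fin 2)) (i j : Fin 2) :
    Measurable fun y => KelvinG0 lam mu (x - y) i j := by
  unfold KelvinG0
  refine Measurable.sub (Measurable.const_mul ?_ _) (by fun_prop)
  split_ifs <;> fun_prop

lemma continuous_log_circlePt {R : ℝ} (hR : 0 < R) {x : EuclideanSpace ℝ (Fin 2)}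
    (hx : ‖x‖ < R) : Continuous fun θ => Real.log ‖x - circlePt R θ‖ :=
  ((continuous_const.sub (continuous_circlePt R)).norm).log
    fun θ => norm_ne_zero_iff.2 (sub_circlePt_ne_zero hR hx θ)

lemma continuous_kernel_circlePt {R : ℝ} (hR : 0 < R) {x : EuclideanSpace ℝ (Fin 2)}
    (hx : ‖x‖ < R) (i j : Fin 2) :
    Continuous fun θ =>
      (x - circlePt R θ) i * (x - circlePt R θ) j / ‖x - circlePt R θ‖ ^ 2 := by
  have hc : Continuous fun θ => x - circlePt R θ := continuous_const.sub (continuous_circlePt R)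
  refine Continuous.div (by fun_prop) (by fun_prop) fun θ => ?_
  exact pow_ne_zero 2 (norm_ne_zero_iff.2 (sub_circlePt_ne_zero hR hx θ))

lemma continuous_KelvinG0 {R : ℝ} (hR : 0 < R) {x : EuclideanSpace ℝ (Fin 2)}
    (hx : ‖x‖ < R) (lam mu : ℝ) (i j : Fin 2) :
    Continuous fun θ => KelvinG0 lam mu (x - circlePt R θ) i j := by
  unfold KelvinG0
  refine Continuous.sub (continuous_const.mul ?_)
    (continuous_const.mul (continuous_kernel_circlePt hR hx i j))
  split_ifs
  · exact continuous_log_circlePt hR hx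
  · exact continuous_const

lemma setIntegral_KelvinG0_diag {R : ℝ} (hR : 0 < R) {x : EuclideanSpace ℝ (Fin 2)}
    (hx : ‖x‖ < R) (lam mu : ℝ) :
    ∫ y in Metric.sphere (0 : EuclideanSpace ℝ (Fin 2)) R, KelvinG0 lam mu (x - y) 0 0 ∂μH[1]
      = tau1 lam mu * R * Real.log R - tau2 lam mu / 2 * R := by
  rw [setIntegral_sphere hR (measurable_KelvinG0 lam mu x 0 0)]
  simp only [KelvinG0, if_true]
  rw [intervalIntegral.integral_sub
      (((continuous_log_circlePt hR hx).intervalIntegrable _ _).const_mul _)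
      (((continuous_kernel_circlePt hR hx 0 0).intervalIntegrable _ _).const_mul _),
    intervalIntegral.integral_const_mul, intervalIntegral.integral_const_mul,
    integral_log_circlePt hR hx, integral_kernel_diag hR hx]
  have := Real.pi_ne_zero
  field_simp

lemma setIntegral_KelvinG0_offdiag {R : ℝ} (hR : 0 < R) {x : EuclideanSpace ℝ (Fin 2)}
    (hx : ‖x‖ < R) (lam mu : ℝ) :
    ∫ y in Metric.sphere (0 : EuclideanSpace ℝ (Fin 2)) R, KelvinG0 lam mu (x - y) 1 0 ∂μH[1]
      = 0 := by
  rw [setIntegral_sphere hR (measurable_KelvinG0 lam mu x 1 0)]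
  simp only [KelvinG0, one_ne_zero, if_false, mul_zero, zero_sub]
  rw [intervalIntegral.integral_neg, intervalIntegral.integral_const_mul,
    integral_kernel_offdiag hR hx, mul_zero, neg_zero, mul_zero]

/-- Inside the disk, the single-layer potential of the constant density `e₁` is the constant
`c₀ e₁`. -/
lemma SLc_e1 {R : ℝ} (hR : 0 < R) {x : EuclideanSpace ℝ (Fin 2)} (hx : ‖x‖ < R) (lam mu : ℝ) :
    SLc lam mu R x ![1, 0]
      = ((tau1 lam mu * R * Real.log R - tau2 lam mu / 2 * R : ℝ) : ℂ) •
        (fun i => ((![1, 0] : Fin 2 → ℝ) i : ℂ)) := by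
  have hvec : ∀ y i, (KelvinG0 lam mu (x - y)).mulVec ![1, 0] i = KelvinG0 lam mu (x - y) i 0 := by
    intro y i
    simp [Matrix.mulVec, dotProduct, Fin.sum_univ_two]
  funext i
  have hintegrable : ∀ i, IntegrableOn (fun y => (KelvinG0 lam mu (x - y)).mulVec ![1, 0] i)
      (Metric.sphere (0 : EuclideanSpace ℝ (Fin 2)) R) μH[1] := by
    intro i
    simp_rw [hvec]
    exact integrableOn_sphere hR (measurable_KelvinG0 lam mu x i 0)
      (continuous_KelvinG0 hR hx lam mu i 0)
  simp only [SLc, Pi.smul_apply]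
  rw [eval_integral hintegrable]
  simp_rw [hvec]
  fin_cases i
  · simp only [Fin.zero_eta]
    rw [setIntegral_KelvinG0_diag hR hx]
    simp
  · simp only [Fin.mk_one]
    rw [setIntegral_KelvinG0_offdiag hR hx]
    simp

/-- Of the terms of `β_k` only the summand `-πi` has an imaginary part. -/
lemma im_betaK (lam mu k : ℝ) : (betaK lam mu k).im = -(tau1 lam mu / 4) := by
  have := Real.pi_ne_zero
  simp only [betaK, Complex.add_im, Complex.ofReal_im, Complex.im_ofReal_mul, Complex.sub_im,
    Complex.I_im, mul_one, add_zero]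
  simp
  field_simp

lemma tau1_pos {lam mu : ℝ} (hmu : 0 < mu) (hlm : 0 < lam + mu) : 0 < tau1 lam mu := by
  have : 0 < lam + 2 * mu := by linarith
  unfold tau1
  positivity

/-- Assume `τ₁ ln R ≠ τ₂/2` and set `c₀ = τ₁ R ln R − (τ₂/2) R`. Then for all `k₁, k₂ > 0`
one has `c₀ + 2πR β_{k₂} ≠ 0` and, with `a = (c₀ + 2πR β_{k₁})/(c₀ + 2πR β_{k₂})`, for every
`x ∈ D` the identity
`∫_{∂D} G⁰(x−y) e₁ dσ(y) + 2πR β_{k₁} e₁ = a (∫_{∂D} G⁰(x−y) e₁ dσ(y) + 2πR β_{k₂} e₁)`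
holds in `ℂ²`. -/
theorem hatS_constant_alignment (R lam mu k1 k2 : ℝ) (hR : 0 < R)
    (hmu : 0 < mu) (hlm : 0 < lam + mu)
    (hne : tau1 lam mu * Real.log R ≠ tau2 lam mu / 2)
    (hk1 : 0 < k1) (hk2 : 0 < k2) :
    ((tau1 lam mu * R * Real.log R - tau2 lam mu / 2 * R : ℝ) : ℂ)
        + 2 * Real.pi * R * betaK lam mu k2 ≠ 0
    ∧ ∀ x ∈ Metric.ball (0 : EuclideanSpace ℝ (Fin 2)) R,
        SLc lam mu R x ![1, 0]
            + (2 * Real.pi * R * betaK lam mu k1) • (fun i => ((![1, 0] : Fin 2 → ℝ) i : ℂ))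
          = ((((tau1 lam mu * R * Real.log R - tau2 lam mu / 2 * R : ℝ) : ℂ)
                + 2 * Real.pi * R * betaK lam mu k1)
              / (((tau1 lam mu * R * Real.log R - tau2 lam mu / 2 * R : ℝ) : ℂ)
                + 2 * Real.pi * R * betaK lam mu k2)) •
            (SLc lam mu R x ![1, 0]
              + (2 * Real.pi * R * betaK lam mu k2)
                  • (fun i => ((![1, 0] : Fin 2 → ℝ) i : ℂ))) := by
  have hne0 : ((tau1 lam mu * R * Real.log R - tau2 lam mu / 2 * R : ℝ) : ℂ)
      + 2 * Real.pi * R * betaK lam mu k2 ≠ 0 := by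
    intro h
    have h1 := congrArg Complex.im h
    rw [Complex.add_im, Complex.ofReal_im,
      show (2 * Real.pi * R : ℂ) = ((2 * Real.pi * R : ℝ) : ℂ) by push_cast; rfl,
      Complex.im_ofReal_mul, im_betaK, Complex.zero_im] at h1
    have h2 : 0 < 2 * Real.pi * R * (tau1 lam mu / 4) := by
      have := tau1_pos hmu hlm
      positivity
    linarith
  refine ⟨hne0, fun x hx => ?_⟩
  rw [SLc_e1 hR (by simpa using hx), ← add_smul, ← add_smul, smul_smul, div_mul_cancel₀ _ hne0]
end
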